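/- For every real number t there exist at least three distinct complex numbers ρ₁, ρ₂, ρ₃ such that each ρⱼ is a zero of the completed Riemann zeta function ξ, satisfies 0 < Re(ρⱼ) ≤ 1/2, and satisfies |t − Im(ρⱼ)| ≤ 22. -/

import Mathlib

open Complex

section PA
open Complex Metric

lemma mprod_norm_lower (S : Multiset ℂ) (z : ℂ) (d : ℝ) (hd : 0 ≤ d) (h : ∀ w ∈ S, d ≤ ‖z - w‖) :
    d ^ (Multiset.card S) ≤ ‖(S.map (fun w => z - w)).prod‖ := by
  induction S using Multiset.induction_on with
  | empty => simp
  | cons a S ih =>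
    simp only [Multiset.card_cons, Multiset.map_cons, Multiset.prod_cons, norm_mul, pow_succ]
    rw [mul_comm]
    have h1 := h a (by simp)
    have h2 := ih (fun w hw => h w (by simp [hw]))
    gcongr

lemma mprod_norm_upper (S : Multiset ℂ) (z : ℂ) (d : ℝ) (h : ∀ w ∈ S, ‖z - w‖ ≤ d) :
    ‖(S.map (fun w => z - w)).prod‖ ≤ d ^ (Multiset.card S) := by
  induction S using Multiset.induction_on with
  | empty => simp
  | cons a S ih =>
    simp only [Multiset.card_cons, Multiset.map_cons, Multiset.prod_cons, norm_mul, pow_succ]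
    rw [mul_comm]
    have h1 := h a (by simp)
    have h2 := ih (fun w hw => h w (by simp [hw]))
    have := (norm_nonneg _).trans h1
    gcongr

lemma quot_bound {g h : ℂ → ℂ} (hh : Differentiable ℂ h) {S : Multiset ℂ}
    (hg : ∀ z, g z = (S.map (fun w => z - w)).prod * h z) {r M : ℝ} (hr : 0 < r)
    (hS : ∀ w ∈ S, ‖w‖ ≤ r) (hM : ∀ z, ‖z‖ ≤ 3 * r → ‖g z‖ ≤ M) (z : ℂ) (hz : ‖z‖ ≤ 3 * r) :
    ‖h z‖ * (‖g 0‖ * 2 ^ (Multiset.card S)) ≤ ‖h 0‖ * M := by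
  set n := Multiset.card S
  have hM0 : 0 ≤ M := (norm_nonneg _).trans (hM 0 (by simp; positivity))
  have hb : ∀ x ∈ frontier (ball (0 : ℂ) (3 * r)), ‖h x‖ ≤ M / (2 * r) ^ n := by
    intro x hx
    rw [frontier_ball _ (by positivity)] at hx
    have hx' : ‖x‖ = 3 * r := by simpa using hx
    have h1 := mprod_norm_lower S x (2 * r) (by positivity) (fun w hw => by
      have := norm_sub_norm_le x w
      have := hS w hw
      linarith)
    have h2 := hM x hx'.le
    rw [hg, norm_mul] at h2
    rw [le_div_iff₀ (by positivity)]
    refine le_trans ?_ h2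
    rw [mul_comm]
    gcongr
  have h1 : ‖h z‖ ≤ M / (2 * r) ^ n := by
    refine norm_le_of_forall_mem_frontier_norm_le isBounded_ball hh.diffContOnCl hb ?_
    rw [closure_ball _ (by positivity)]
    simpa using hz
  have h2 : ‖g 0‖ ≤ r ^ n * ‖h 0‖ := by
    rw [hg, norm_mul]
    gcongr
    exact mprod_norm_upper S 0 r (fun w hw => by simpa using hS w hw)
  calc ‖h z‖ * (‖g 0‖ * 2 ^ n) ≤ M / (2 * r) ^ n * ((r ^ n * ‖h 0‖) * 2 ^ n) := by gcongr
    _ = ‖h 0‖ * M := by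
      rw [mul_pow]; field_simp

lemma extract_zeros {g : ℂ → ℂ} (hgd : Differentiable ℂ g) (h0 : g 0 ≠ 0) {r : ℝ} (hr : 0 < r) :
    ∃ (S : Multiset ℂ) (h : ℂ → ℂ), Differentiable ℂ h ∧
      (∀ z, g z = (S.map (fun w => z - w)).prod * h z) ∧ (∀ w ∈ S, ‖w‖ ≤ r) ∧
      (∀ z, ‖z‖ ≤ r → h z ≠ 0) := by
  classical
  obtain ⟨M, hM⟩ : ∃ M, ∀ z ∈ closedBall (0 : ℂ) (3 * r), ‖g z‖ ≤ M :=
    (isCompact_closedBall (0 : ℂ) (3 * r)).exists_bound_of_continuousOn hgd.continuous.continuousOn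
  let P : ℕ → Prop := fun n => ∃ (S : Multiset ℂ) (h : ℂ → ℂ), Multiset.card S = n ∧
      Differentiable ℂ h ∧
      (∀ z, g z = (S.map (fun w => z - w)).prod * h z) ∧ (∀ w ∈ S, ‖w‖ ≤ r)
  have hP0 : P 0 := ⟨0, g, by simp, hgd, by simp, by simp⟩
  obtain ⟨K, hK⟩ := pow_unbounded_of_one_lt (M / ‖g 0‖) (one_lt_two)
  have hbd : ∀ n, P n → n ≤ K := by
    rintro n ⟨S, h, hc, hd, he, hS⟩
    by_contra hlt
    push Not at hlt
    have := quot_bound hd he hr hS (fun z hz => hM z (by simpa using hz)) 0 (by simp; positivity)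
    have hh0 : h 0 ≠ 0 := by
      intro hh; apply h0; rw [he, hh, mul_zero]
    have h1 : ‖g 0‖ * 2 ^ (Multiset.card S) ≤ M :=
      le_of_mul_le_mul_left this (norm_pos_iff.2 hh0)
    rw [hc] at h1
    have h2 : (2 : ℝ) ^ K ≤ 2 ^ n := pow_le_pow_right₀ (by norm_num) hlt.le
    have h3 : 0 < ‖g 0‖ := norm_pos_iff.2 h0
    rw [div_lt_iff₀ h3] at hK
    nlinarith
  let n := Nat.findGreatest P K
  have hn : P n := Nat.findGreatest_spec (Nat.zero_le K) hP0
  obtain ⟨S, h, hc, hd, he, hS⟩ := hn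
  refine ⟨S, h, hd, he, hS, fun w hw hw0 => ?_⟩
  have : P (n + 1) := by
    refine ⟨w ::ₘ S, dslope h w, by simp [hc], ?_, ?_, ?_⟩
    · rw [← differentiableOn_univ]
      exact (Complex.differentiableOn_dslope Filter.univ_mem).2 hd.differentiableOn
    · intro z
      have h1 := sub_smul_dslope h w z
      rw [hw0, sub_zero, smul_eq_mul] at h1
      rw [he, ← h1]
      simp; ring
    · intro x hx
      rcases Multiset.mem_cons.1 hx with rfl | hx
      · exact hw
      · exact hS x hx
  have := Nat.le_findGreatest (hbd _ this) this
  change n + 1 ≤ n at this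
  omega

lemma exists_log_ball {h : ℂ → ℂ} (hd : Differentiable ℂ h) {r : ℝ} (hr : 0 < r)
    (hne : ∀ z, ‖z‖ < r → h z ≠ 0) :
    ∃ q : ℂ → ℂ, DifferentiableOn ℂ q (ball 0 r) ∧ q 0 = 0 ∧ ∀ z, ‖z‖ < r → h z = h 0 * exp (q z) := by
  have h1 : DifferentiableOn ℂ (fun z => deriv h z / h z) (ball 0 r) := by
    apply DifferentiableOn.div
    · have := (hd.contDiff (n := 2))
      exact ((hd.differentiableOn (s := Set.univ)).deriv isOpen_univ).mono (Set.subset_univ _)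
    · exact hd.differentiableOn
    · intro x hx; exact hne x (by simpa using hx)
  obtain ⟨F, hF⟩ := h1.isExactOn_ball.with_val_at 0 0
  obtain ⟨hF0, hF⟩ := hF
  refine ⟨F, fun z hz => (hF z hz).differentiableAt.differentiableWithinAt, hF0, ?_⟩
  intro z hz
  have hder : ∀ x ∈ ball (0 : ℂ) r, HasDerivAt (fun x => h x * exp (-F x)) 0 x := by
    intro x hx
    have := (hd x).hasDerivAt.mul ((hF x hx).neg.cexp)
    convert! this using 1
    have := hne x (by simpa using hx)
    field_simp; simp
  have hconst : h z * exp (-F z) = h 0 * exp (-F 0) := by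
    refine (convex_ball (0 : ℂ) r).is_const_of_fderivWithin_eq_zero (𝕜 := ℂ)
      (f := fun x => h x * exp (-F x)) ?_ ?_ (by simpa using hz) (by simpa using hr)
    · intro x hx; exact (hder x hx).differentiableAt.differentiableWithinAt
    · intro x hx
      rw [fderivWithin_of_isOpen isOpen_ball hx]
      have := (hder x hx).hasFDerivAt.fderiv
      rw [this]; simp
  rw [hF0, neg_zero, exp_zero, mul_one] at hconst
  rw [← hconst, mul_assoc, ← exp_add]; simp

lemma hadamard {g : ℂ → ℂ} (hgd : Differentiable ℂ g) (h0 : g 0 ≠ 0)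
    (hgrow : ∀ δ > 0, ∃ R0 : ℝ, ∀ R ≥ R0, ∀ z, ‖z‖ ≤ R → ‖g z‖ ≤ Real.exp (δ * R ^ 2))
    (r0 : ℝ) (hr0 : 0 < r0) (ε : ℝ) (hε : 0 < ε) :
    ∃ (S : Multiset ℂ) (c : ℝ), 0 < c ∧ (∀ w ∈ S, g w = 0) ∧ ∀ z, ‖z‖ ≤ r0 →
      ∃ η : ℝ, |η| ≤ ε ∧ ‖g z‖ * ‖g (-z)‖ =
        c * Real.exp η * (S.map (fun w => ‖z ^ 2 - w ^ 2‖)).prod := by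
  set δ := ε / (288 * r0 ^ 2) with hδ
  have hδ0 : 0 < δ := by positivity
  obtain ⟨R0, hR0⟩ := hgrow δ hδ0
  have hg0 : 0 < ‖g 0‖ := norm_pos_iff.2 h0
  -- choose r
  obtain ⟨r, hr1, hr2, hr3, hr4⟩ : ∃ r : ℝ, 0 < r ∧ R0 ≤ 3 * r ∧ 2 * r0 < r ∧
      -Real.log ‖g 0‖ ≤ δ * (3 * r) ^ 2 := by
    refine ⟨max (max 1 (|R0|)) (max (2 * r0 + 1) (|Real.log ‖g 0‖| / δ)), ?_, ?_, ?_, ?_⟩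
    · exact lt_of_lt_of_le one_pos ((le_max_left _ _).trans (le_max_left _ _))
    · have h1 := (le_max_right 1 |R0|).trans (le_max_left _ (max (2 * r0 + 1) (|Real.log ‖g 0‖| / δ)))
      have := le_abs_self R0
      have := abs_nonneg R0
      linarith
    · have h1 := (le_max_left (2 * r0 + 1) (|Real.log ‖g 0‖| / δ)).trans
        (le_max_right (max 1 (|R0|)) _)
      linarith
    · have h1 := (le_max_right (2 * r0 + 1) (|Real.log ‖g 0‖| / δ)).trans
        (le_max_right (max 1 (|R0|)) _)
      have h2 := (le_max_left 1 |R0|).trans (le_max_left _ (max (2 * r0 + 1) (|Real.log ‖g 0‖| / δ)))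
      set r := max (max 1 (|R0|)) (max (2 * r0 + 1) (|Real.log ‖g 0‖| / δ))
      rw [div_le_iff₀ hδ0] at h1
      have := neg_le_abs (Real.log ‖g 0‖)
      nlinarith [mul_pos hδ0 (lt_of_lt_of_le one_pos h2)]
  obtain ⟨S, h, hd, he, hS, hne⟩ := extract_zeros hgd h0 hr1
  have hh0 : h 0 ≠ 0 := hne 0 (by simpa using hr1.le)
  obtain ⟨q, hq, hq0, hqe⟩ := exists_log_ball hd hr1 (fun z hz => hne z hz.le)
  have hM := quot_bound hd he hr1 hS (M := Real.exp (δ * (3 * r) ^ 2))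
    (fun z hz => hR0 _ hr2 z hz)
  have hre : ∀ z, ‖z‖ < r → (q z).re ≤ 2 * (δ * (3 * r) ^ 2) := by
    intro z hz
    have h1 := hM z (by linarith)
    rw [hqe z hz, norm_mul, norm_exp, mul_assoc] at h1
    have h2 := le_of_mul_le_mul_left h1 (norm_pos_iff.2 hh0)
    have h3 : (1 : ℝ) ≤ 2 ^ (Multiset.card S) := one_le_pow₀ (by norm_num)
    have h4 : Real.exp (q z).re * ‖g 0‖ ≤ Real.exp (δ * (3 * r) ^ 2) := by
      refine le_trans ?_ h2
      gcongr
      nlinarith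
    have h5 := Real.log_le_log (by positivity) h4
    rw [Real.log_mul (by positivity) (by positivity), Real.log_exp, Real.log_exp] at h5
    linarith
  have hM' : 0 < 2 * (δ * (3 * r) ^ 2) := by positivity
  have hbc : ∀ z, ‖z‖ < r / 2 → ‖q z‖ ≤ 36 * δ * r ^ 2 := by
    intro z hz
    have := borelCaratheodory_zero hM' hq (fun z hz => hre z (by simpa using hz)) hr1
      (z := z) (by simp; linarith) hq0
    refine this.trans ?_
    rw [div_le_iff₀ (by linarith)]
    nlinarith [mul_pos hδ0 (pow_pos hr1 2)]
  have hneg : ∀ z : ℂ, HasDerivAt (fun z : ℂ => -z) (-1) z := fun z => hasDerivAt_neg z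
  have hed : DifferentiableOn ℂ (fun z => q z + q (-z)) (ball 0 (r / 2)) := by
    refine (hq.mono (ball_subset_ball (by linarith))).add (hq.comp (differentiable_neg).differentiableOn ?_)
    intro x hx
    simp at hx ⊢; linarith
  have hsch : ∀ z, ‖z‖ ≤ r0 → ‖q z + q (-z)‖ ≤ ε := by
    intro z hz
    have := dist_le_mul_div_pow_of_mapsTo_ball_of_isLittleO (n := 1) (c := 0) (z := z)
      (R₂ := 72 * δ * r ^ 2) hed ?_ ?_ ?_
    · simp only [neg_zero, hq0, add_zero, dist_zero_right] at this
      refine this.trans ?_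
      calc 72 * δ * r ^ 2 * (‖z‖ / (r / 2)) ^ (1 + 1) = 288 * δ * ‖z‖ ^ 2 := by
              have e : ‖z‖ / (r / 2) = 2 * ‖z‖ / r := by field_simp
              rw [e, div_pow]
              field_simp
              norm_num
              ring
        _ ≤ 288 * δ * r0 ^ 2 := by gcongr
        _ = ε := by rw [hδ]; field_simp
    · intro x hx
      have hx' : ‖x‖ < r / 2 := by simpa using hx
      simp only [neg_zero, hq0, add_zero, mem_closedBall, dist_zero_right]
      have h1 := hbc x hx'
      have h2 := hbc (-x) (by simpa using hx')
      refine (norm_add_le _ _).trans ?_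
      linarith
    · have hq' : HasDerivAt q (deriv q 0) 0 :=
        (hq.differentiableAt (ball_mem_nhds _ hr1)).hasDerivAt
      have h2 : HasDerivAt (fun z => q z + q (-z)) 0 0 := by
        have h3 : HasDerivAt (fun z => q (-z)) (deriv q 0 * (-1)) 0 :=
          HasDerivAt.comp (h₂ := q) (h := fun z : ℂ => -z) 0 (by simpa using hq') (hneg 0)
        convert! hq'.add h3 using 1
        ring
      have := hasDerivAt_iff_isLittleO.1 h2
      simp only [smul_zero, sub_zero] at this ⊢
      simpa using this.norm_right
    · simp; linarith
  refine ⟨S, ‖h 0‖ ^ 2, by positivity, ?_, ?_⟩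
  · intro w hw
    rw [he]
    have : (S.map (fun x => w - x)).prod = 0 := by
      rw [Multiset.prod_eq_zero_iff, Multiset.mem_map]
      exact ⟨w, hw, by simp⟩
    rw [this, zero_mul]
  · intro z hz
    refine ⟨(q z + q (-z)).re, (abs_re_le_norm _).trans (hsch z hz), ?_⟩
    have hz1 : ‖z‖ < r := by linarith
    rw [he z, he (-z), hqe z hz1, hqe (-z) (by simpa using hz1)]
    have h1 : (S.map (fun w => ‖z ^ 2 - w ^ 2‖)).prod =
        ‖(S.map (fun w => z - w)).prod‖ * ‖(S.map (fun w => -z - w)).prod‖ := by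
      have : ∀ S : Multiset ℂ, (S.map (fun w => ‖z ^ 2 - w ^ 2‖)).prod =
        ‖(S.map (fun w => z - w)).prod‖ * ‖(S.map (fun w => -z - w)).prod‖ := by
        intro S
        induction S using Multiset.induction_on with
        | empty => simp
        | cons a S ih =>
          simp only [Multiset.map_cons, Multiset.prod_cons, norm_mul, ih]
          have : ‖z ^ 2 - a ^ 2‖ = ‖z - a‖ * ‖-z - a‖ := by
            rw [← norm_mul, ← norm_neg]; congr 1; ring
          rw [this]; ring
      exact this S
    rw [h1, add_re, Real.exp_add]
    simp only [norm_mul, norm_exp]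
    ring

end PA

section PB
open Complex Filter Topology

noncomputable def emE (s : ℂ) (x : ℂ) : ℂ :=
  x ^ (1 - s) + (s - 1) * (x ^ (-s) / 2 + s * x ^ (-s - 1) / 12)

noncomputable def emR (n : ℕ) (s : ℂ) : ℂ :=
  (s - 1) * (n : ℂ) ^ (-s) + emE s ((n : ℂ) + 1) - emE s n

lemma b3_bound (u : ℝ) (h0 : 0 ≤ u) (h1 : u ≤ 1) : |u ^ 3 - 3 / 2 * u ^ 2 + u / 2| ≤ 1 / 20 := by
  rw [abs_le]
  constructor
  · have : 0 ≤ (u - 1 / 2 - 29 / 100) ^ 2 * (u + 8 / 100) := by positivity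
    nlinarith
  · have : 0 ≤ (1 / 2 - u - 29 / 100) ^ 2 * (1 - u + 8 / 100) := by
      have : 0 ≤ 1 - u := by linarith
      positivity
    nlinarith

lemma emR_bound (n : ℕ) (hn : 1 ≤ n) (s : ℂ) (hs : 0 < s.re) :
    ‖emR n s‖ ≤ ‖(s - 1) * s * (s + 1) * (s + 2)‖ / 120 * (n : ℝ) ^ (-s.re - 3) := by
  have hn0 : (0 : ℝ) < n := by exact_mod_cast hn
  let p : ℂ → ℝ → ℂ := fun c u => ((n : ℂ) + u) ^ c
  have hp : ∀ (c : ℂ) (u : ℝ), 0 ≤ u → HasDerivAt (p c) (c * p (c - 1) u) u := by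
    intro c u hu
    have h1 : HasDerivAt (fun z : ℂ => ((n : ℂ) + z) ^ c) (c * ((n : ℂ) + u) ^ (c - 1) * 1) (u : ℂ) := by
      refine HasDerivAt.cpow_const ((hasDerivAt_id (u : ℂ)).const_add _) ?_
      left
      simp
      positivity
    simpa using h1.comp_ofReal
  have hB3 : ∀ u : ℝ, HasDerivAt (fun u : ℝ => (u : ℂ) ^ 3 - 3 / 2 * (u : ℂ) ^ 2 + u / 2)
      (3 * ((u : ℂ) ^ 2 - u + 1 / 6)) u := by
    intro u
    have h0 := (hasDerivAt_id (u : ℂ))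
    have := (((h0.pow 3).sub ((h0.pow 2).const_mul (3 / 2))).add (h0.div_const 2)).comp_ofReal
    convert! this using 1
    simp; ring
  have hB2 : ∀ u : ℝ, HasDerivAt (fun u : ℝ => (u : ℂ) ^ 2 - u + 1 / 6)
      (2 * ((u : ℂ) - 1 / 2)) u := by
    intro u
    have h0 := (hasDerivAt_id (u : ℂ))
    have := (((h0.pow 2).sub h0).add_const (1 / 6)).comp_ofReal
    convert! this using 1
    simp; ring
  have hB1 : ∀ u : ℝ, HasDerivAt (fun u : ℝ => (u : ℂ) - 1 / 2) 1 u := by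
    intro u
    exact ((hasDerivAt_id (u : ℂ)).sub_const (1 / 2)).comp_ofReal
  let Φ : ℝ → ℂ := fun u => (s - 1) * (s * (s + 1) / 6 * (((u : ℂ) ^ 3 - 3 / 2 * (u : ℂ) ^ 2 + u / 2) * p (-s - 2) u)
    + s / 2 * (((u : ℂ) ^ 2 - u + 1 / 6) * p (-s - 1) u) + ((u : ℂ) - 1 / 2) * p (-s) u) + p (1 - s) u
  have hΦ : ∀ u : ℝ, 0 ≤ u → HasDerivAt Φ
      (-((s - 1) * s * (s + 1) * (s + 2)) / 6 * ((u : ℂ) ^ 3 - 3 / 2 * (u : ℂ) ^ 2 + u / 2) * p (-s - 3) u) u := by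
    intro u hu
    have h := ((((((hB3 u).mul (hp (-s - 2) u hu)).const_mul (s * (s + 1) / 6)).add
      (((hB2 u).mul (hp (-s - 1) u hu)).const_mul (s / 2))).add
      ((hB1 u).mul (hp (-s) u hu))).const_mul (s - 1)).add (hp (1 - s) u hu)
    have e1 : -s - 2 - 1 = -s - 3 := by ring
    have e2 : -s - 1 - 1 = -s - 2 := by ring
    have e3 : 1 - s - 1 = -s := by ring
    rw [e1, e2, e3] at h
    convert! h using 1
    ring
  have hmv := norm_image_sub_le_of_norm_deriv_le_segment' (f := Φ) (a := 0) (b := 1)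
    (C := ‖(s - 1) * s * (s + 1) * (s + 2)‖ / 120 * (n : ℝ) ^ (-s.re - 3))
    (fun u hu => (hΦ u hu.1).hasDerivWithinAt) (by
      intro u hu
      have hb := b3_bound u hu.1 hu.2.le
      have e : ‖((u : ℂ) ^ 3 - 3 / 2 * (u : ℂ) ^ 2 + u / 2)‖ = |u ^ 3 - 3 / 2 * u ^ 2 + u / 2| := by
        rw [← Real.norm_eq_abs, ← Complex.norm_real]; push_cast; rfl
      have e' : ‖p (-s - 3) u‖ = ((n : ℝ) + u) ^ (-s.re - 3) := by
        have : p (-s - 3) u = (((n : ℝ) + u : ℝ) : ℂ) ^ (-s - 3) := by simp [p]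
        rw [this, Complex.norm_cpow_eq_rpow_re_of_pos (by linarith [hu.1])]
        simp
      have e'' : ((n : ℝ) + u) ^ (-s.re - 3) ≤ (n : ℝ) ^ (-s.re - 3) :=
        Real.rpow_le_rpow_of_nonpos hn0 (by linarith [hu.1]) (by linarith)
      rw [norm_mul, norm_mul, norm_div, norm_neg, e, e']
      have h6 : ‖(6 : ℂ)‖ = 6 := by simp
      rw [h6]
      calc _ ≤ ‖(s - 1) * s * (s + 1) * (s + 2)‖ / 6 * (1 / 20) * (n : ℝ) ^ (-s.re - 3) := by
            gcongr
            exact Real.rpow_nonneg (by linarith [hu.1]) _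
        _ = _ := by ring) 1 (by simp)
  have hend : Φ 1 - Φ 0 = emR n s := by
    simp only [Φ, emR, emE, p]
    push_cast
    simp only [add_zero]
    ring
  rw [hend] at hmv
  simpa using hmv


lemma cube_sum (N : ℕ) (hN : 2 ≤ N) (K : ℕ) :
    ∑ k ∈ Finset.range K, 1 / ((N + k : ℕ) : ℝ) ^ 3 ≤
      1 / (2 * (N : ℝ) * (N - 1)) - 1 / (2 * ((N : ℝ) + K) * (N + K - 1)) := by
  have hN' : (2 : ℝ) ≤ N := by exact_mod_cast hN
  induction K with
  | zero => simp
  | succ K ih =>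
    rw [Finset.sum_range_succ]
    have hx : (2 : ℝ) ≤ N + K := by linarith [(Nat.cast_nonneg K : (0 : ℝ) ≤ K)]
    push_cast at ih ⊢
    rw [show (N : ℝ) + (K + 1) = N + K + 1 by ring]
    generalize (N : ℝ) + K = x at *
    have : 1 / x ^ 3 ≤ 1 / (2 * x * (x - 1)) - 1 / (2 * (x + 1) * x) := by
      have h1 : 0 < x := by linarith
      have h2 : 0 < x - 1 := by linarith
      rw [div_sub_div _ _ (by positivity) (by positivity), div_le_div_iff₀ (by positivity) (by positivity)]
      nlinarith [pow_pos h1 2]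
    rw [show x + 1 - 1 = x by ring]
    linarith

lemma cube_sum' (N : ℕ) (hN : 2 ≤ N) (K : ℕ) :
    ∑ k ∈ Finset.range K, 1 / ((N + k : ℕ) : ℝ) ^ 3 ≤ 1 / (2 * (N : ℝ) * (N - 1)) := by
  refine (cube_sum N hN K).trans ?_
  have hN' : (2 : ℝ) ≤ N := by exact_mod_cast hN
  have hx : (2 : ℝ) ≤ N + K := by linarith [(Nat.cast_nonneg K : (0 : ℝ) ≤ K)]
  have : 0 ≤ 1 / (2 * ((N : ℝ) + K) * (N + K - 1)) := by
    apply div_nonneg (by norm_num)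
    nlinarith
  linarith

lemma cube_summable (N : ℕ) (hN : 2 ≤ N) : Summable (fun k : ℕ => 1 / ((N + k : ℕ) : ℝ) ^ 3) :=
  summable_of_sum_range_le (fun k => by positivity) (cube_sum' N hN)

lemma cube_tsum (N : ℕ) (hN : 2 ≤ N) :
    ∑' k : ℕ, 1 / ((N + k : ℕ) : ℝ) ^ 3 ≤ 1 / (2 * (N : ℝ) * (N - 1)) :=
  Real.tsum_le_of_sum_range_le (fun k => by positivity) (cube_sum' N hN)

lemma emR_bound2 (N : ℕ) (hN : 2 ≤ N) (k : ℕ) (s : ℂ) (hs : 0 < s.re) :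
    ‖emR (N + k) s‖ ≤ ‖(s - 1) * s * (s + 1) * (s + 2)‖ / 120 * (N : ℝ) ^ (-s.re) * (1 / ((N + k : ℕ) : ℝ) ^ 3) := by
  refine (emR_bound (N + k) (by omega) s hs).trans ?_
  have hN0 : (0 : ℝ) < N := by exact_mod_cast (by omega : 0 < N)
  have h0 : (0 : ℝ) < (N + k : ℕ) := by exact_mod_cast (by omega : 0 < N + k)
  rw [mul_assoc (_ / 120)]
  gcongr
  rw [Real.rpow_sub h0, div_eq_mul_one_div, show (3 : ℝ) = ((3 : ℕ) : ℝ) by norm_num, Real.rpow_natCast]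
  gcongr ?_ * _
  refine Real.rpow_le_rpow_of_nonpos hN0 (by push_cast; linarith [(Nat.cast_nonneg k : (0 : ℝ) ≤ k)]) (by linarith)

lemma emR_bound3 (N : ℕ) (hN : 2 ≤ N) (k : ℕ) (s : ℂ) (hs : 0 < s.re) :
    ‖emR (N + k) s‖ ≤ ‖(s - 1) * s * (s + 1) * (s + 2)‖ / 120 * (1 / ((N + k : ℕ) : ℝ) ^ 3) := by
  refine (emR_bound2 N hN k s hs).trans ?_
  have : (N : ℝ) ^ (-s.re) ≤ 1 :=
    Real.rpow_le_one_of_one_le_of_nonpos (by exact_mod_cast (by omega : 1 ≤ N)) (by linarith)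
  gcongr
  exact mul_le_of_le_one_right (by positivity) this

lemma emR_summable (N : ℕ) (hN : 2 ≤ N) (s : ℂ) (hs : 0 < s.re) :
    Summable (fun k => emR (N + k) s) :=
  Summable.of_norm_bounded ((cube_summable N hN).mul_left _) (fun k => emR_bound3 N hN k s hs)

lemma emE_diff (x : ℂ) (hx : x ≠ 0) : Differentiable ℂ (fun s => emE s x) := by
  intro s
  unfold emE
  have h (c : ℂ → ℂ) (hc : Differentiable ℂ c) : DifferentiableAt ℂ (fun s => x ^ (c s)) s :=
    (hc s).const_cpow (Or.inl hx)
  have h1 := h (fun s => 1 - s) (by fun_prop)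
  have h2 := h (fun s => -s) (by fun_prop)
  have h3 := h (fun s => -s - 1) (by fun_prop)
  fun_prop

lemma npow_diff (n : ℕ) (hn : 1 ≤ n) : Differentiable ℂ (fun s : ℂ => (n : ℂ) ^ (-s)) := by
  intro s
  exact (differentiable_neg s).const_cpow (Or.inl (by exact_mod_cast (by omega : n ≠ 0)))

lemma emR_diff (n : ℕ) (hn : 1 ≤ n) : Differentiable ℂ (emR n) := by
  unfold emR
  have h1 := emE_diff ((n : ℂ) + 1) (by exact_mod_cast (by omega : n + 1 ≠ 0))
  have h2 := emE_diff (n : ℂ) (by exact_mod_cast (by omega : n ≠ 0))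
  have h3 := npow_diff n hn
  fun_prop

lemma emE_tendsto (s : ℂ) (hs : 1 < s.re) : Tendsto (fun n : ℕ => emE s n) atTop (𝓝 0) := by
  have h (c : ℂ) (hc : c.re < 0) : Tendsto (fun n : ℕ => (n : ℂ) ^ c) atTop (𝓝 0) := by
    rw [tendsto_zero_iff_norm_tendsto_zero]
    have h1 := (tendsto_rpow_neg_atTop (y := -c.re) (by linarith)).comp (tendsto_natCast_atTop_atTop (R := ℝ))
    refine h1.congr' ?_
    filter_upwards [eventually_ge_atTop 1] with n hn
    simp only [Function.comp, neg_neg]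
    rw [Complex.norm_natCast_cpow_of_pos (by omega)]
  have h1 := h (1 - s) (by simp; linarith)
  have h2 := h (-s) (by simp; linarith)
  have h3 := h (-s - 1) (by simp; linarith)
  have := h1.add (((h2.div_const 2).add ((h3.const_mul s).div_const 12)).const_mul (s - 1))
  simpa [emE] using this

noncomputable def emMain (N : ℕ) (s : ℂ) : ℂ :=
  (s - 1) * ∑ n ∈ Finset.range (N - 1), ((n + 1 : ℕ) : ℂ) ^ (-s) + emE s N

lemma em_tele (N : ℕ) (hN : 2 ≤ N) (s : ℂ) (K : ℕ) :
    emMain N s + ∑ k ∈ Finset.range K, emR (N + k) s = emMain (N + K) s := by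
  induction K with
  | zero => simp
  | succ K ih =>
    rw [Finset.sum_range_succ, ← add_assoc, ih]
    obtain ⟨m, rfl⟩ : ∃ m, N = m + 1 := ⟨N - 1, by omega⟩
    unfold emMain emR
    rw [show m + 1 + (K + 1) - 1 = (m + 1 + K - 1) + 1 by omega, Finset.sum_range_succ,
      show m + 1 + K - 1 + 1 = m + 1 + K by omega]
    push_cast
    ring

lemma em_one_lt (N : ℕ) (hN : 2 ≤ N) (s : ℂ) (hs : 1 < s.re) :
    riemannZeta₁ s = emMain N s + ∑' k, emR (N + k) s := by
  have h1 : Tendsto (fun K => emMain N s + ∑ k ∈ Finset.range K, emR (N + k) s) atTop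
      (𝓝 (emMain N s + ∑' k, emR (N + k) s)) :=
    ((emR_summable N hN s (by linarith)).hasSum.tendsto_sum_nat).const_add _
  refine tendsto_nhds_unique ?_ h1
  simp_rw [em_tele N hN s]
  have hs1 : s ≠ 1 := by rintro rfl; simp at hs
  have e : riemannZeta₁ s = (s - 1) * riemannZeta s + 0 := by
    rw [riemannZeta_eq_inv_sub_mul hs1, ← mul_assoc, mul_inv_cancel₀ (sub_ne_zero.2 hs1)]; ring
  rw [e]
  have hsum : HasSum (fun n : ℕ => ((n + 1 : ℕ) : ℂ) ^ (-s)) (riemannZeta s) := by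
    rw [zeta_eq_tsum_one_div_nat_add_one_cpow hs]
    have hsm : Summable (fun n : ℕ => 1 / ((n : ℂ) + 1) ^ s) := by
      have := (summable_nat_add_iff 1).2 (Complex.summable_one_div_nat_cpow.2 hs)
      simpa using this
    convert! hsm.hasSum using 2 with n
    rw [Complex.cpow_neg]; simp
  have t1 : Tendsto (fun K => N + K - 1) atTop atTop := by
    refine tendsto_atTop_mono (fun K => ?_) tendsto_id
    simp; omega
  have t2 : Tendsto (fun K => N + K) atTop atTop := by
    refine tendsto_atTop_mono (fun K => ?_) tendsto_id
    simp
  exact ((hsum.tendsto_sum_nat.comp t1).const_mul (s - 1)).add ((emE_tendsto s hs).comp t2)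

lemma em_formula (N : ℕ) (hN : 2 ≤ N) (s : ℂ) (hs : 0 < s.re) :
    riemannZeta₁ s = emMain N s + ∑' k, emR (N + k) s := by
  set A : ℝ := ‖s‖ + 3
  let U : Set ℂ := {z | 0 < z.re} ∩ Metric.ball 0 A
  have hUo : IsOpen U := (isOpen_lt continuous_const continuous_re).inter Metric.isOpen_ball
  have hUc : Convex ℝ U := (convex_halfSpace_re_gt 0).inter (convex_ball 0 A)
  have hd1 : DifferentiableOn ℂ (fun z => emMain N z + ∑' k, emR (N + k) z) U := by
    refine DifferentiableOn.add ?_ ?_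
    · refine Differentiable.differentiableOn ?_
      unfold emMain
      have h1 := emE_diff (N : ℂ) (by exact_mod_cast (by omega : N ≠ 0))
      have h2 : Differentiable ℂ (fun s : ℂ => ∑ n ∈ Finset.range (N - 1), ((n + 1 : ℕ) : ℂ) ^ (-s)) :=
        Differentiable.fun_sum (fun n _ => npow_diff (n + 1) (by omega))
      fun_prop
    · refine differentiableOn_tsum_of_summable_norm
        (u := fun k => (A + 1) * A * (A + 1) * (A + 2) / 120 * (1 / ((N + k : ℕ) : ℝ) ^ 3))
        ((cube_summable N hN).mul_left _) (fun k => (emR_diff _ (by omega)).differentiableOn) hUo ?_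
      intro k w hw
      refine (emR_bound3 N hN k w hw.1).trans ?_
      have hw2 : ‖w‖ ≤ A := by
        have := hw.2
        rw [mem_ball_zero_iff] at this
        exact this.le
      rw [norm_mul, norm_mul, norm_mul]
      have a1 : ‖w - 1‖ ≤ A + 1 := (norm_sub_le _ _).trans (by simpa using hw2)
      have a2 : ‖w + 1‖ ≤ A + 1 := (norm_add_le _ _).trans (by simpa using hw2)
      have a3 : ‖w + 2‖ ≤ A + 2 := (norm_add_le _ _).trans (by simpa using hw2)
      have hA : 0 ≤ A := by positivity
      gcongr
  have hA2 : (2 : ℂ) ∈ U := by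
    constructor
    · simp
    · simp [A]; linarith [norm_nonneg s]
  have := (differentiable_riemannZeta₁.differentiableOn.analyticOnNhd hUo).eqOn_of_preconnected_of_eventuallyEq
    (hd1.analyticOnNhd hUo) hUc.isPreconnected hA2 (by
      have : {z : ℂ | 1 < z.re} ∈ 𝓝 (2 : ℂ) := (isOpen_lt continuous_const continuous_re).mem_nhds (by simp)
      filter_upwards [this] with z hz
      exact em_one_lt N hN z hz)
  exact this ⟨hs, by simp [A]⟩

lemma em_zeta1 (N : ℕ) (hN : 2 ≤ N) (s : ℂ) (hs : 0 < s.re) :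
    ‖riemannZeta₁ s - emMain N s‖ ≤
      ‖(s - 1) * s * (s + 1) * (s + 2)‖ / 120 * (N : ℝ) ^ (-s.re) * (1 / (2 * (N : ℝ) * (N - 1))) := by
  rw [em_formula N hN s hs, add_sub_cancel_left]
  refine (tsum_of_norm_bounded ((cube_summable N hN).mul_left _).hasSum
    (fun k => emR_bound2 N hN k s hs)).trans ?_
  rw [tsum_mul_left]
  gcongr
  exact cube_tsum N hN

lemma em_zeta (N : ℕ) (hN : 2 ≤ N) (s : ℂ) (hs : 0 < s.re) (hs1 : s ≠ 1) :
    ‖riemannZeta s - (∑ n ∈ Finset.range (N - 1), ((n + 1 : ℕ) : ℂ) ^ (-s) + (N : ℂ) ^ (1 - s) / (s - 1)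
      + (N : ℂ) ^ (-s) / 2 + s * (N : ℂ) ^ (-s - 1) / 12)‖ ≤
      ‖s * (s + 1) * (s + 2)‖ / 120 * (N : ℝ) ^ (-s.re) * (1 / (2 * (N : ℝ) * (N - 1))) := by
  have h := em_zeta1 N hN s hs
  have h0 : s - 1 ≠ 0 := sub_ne_zero.2 hs1
  have h0' : 0 < ‖s - 1‖ := norm_pos_iff.2 h0
  have e1 : riemannZeta₁ s - emMain N s = (s - 1) * (riemannZeta s - (∑ n ∈ Finset.range (N - 1), ((n + 1 : ℕ) : ℂ) ^ (-s) + (N : ℂ) ^ (1 - s) / (s - 1)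
      + (N : ℂ) ^ (-s) / 2 + s * (N : ℂ) ^ (-s - 1) / 12)) := by
    rw [riemannZeta_eq_inv_sub_mul hs1, emMain, emE]
    field_simp
    ring
  have e2 : (s - 1) * s * (s + 1) * (s + 2) = (s - 1) * (s * (s + 1) * (s + 2)) := by ring
  rw [e1, e2, norm_mul, norm_mul (s - 1)] at h
  refine le_of_mul_le_mul_left (h.trans (le_of_eq ?_)) h0'
  ring

end PB

section PC
open Complex Filter Topology ComplexConjugate

lemma norm_Gamma_le (s : ℂ) (hs : 0 < s.re) : ‖Complex.Gamma s‖ ≤ Real.Gamma s.re := by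
  rw [Complex.Gamma_eq_integral hs, Real.Gamma_eq_integral hs, Complex.GammaIntegral]
  refine (MeasureTheory.norm_integral_le_integral_norm _).trans (le_of_eq ?_)
  refine MeasureTheory.setIntegral_congr_fun measurableSet_Ioi (fun x hx => ?_)
  simp only [norm_mul]
  rw [Complex.norm_cpow_eq_rpow_re_of_pos hx, Complex.norm_real, Real.norm_eq_abs, Real.abs_exp]
  simp

lemma Gamma_real_bound (x D : ℝ) (hx : 1 / 4 ≤ x) (hD : x + 2 ≤ D) :
    Real.Gamma x ≤ 16 * Real.exp (D * Real.log D) := by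
  have h1 : Real.Gamma (x + 2) = (x + 1) * (x * Real.Gamma x) := by
    rw [show x + 2 = (x + 1) + 1 by ring, Real.Gamma_add_one (by linarith), Real.Gamma_add_one (by linarith)]
  have h2 : Real.Gamma (x + 2) ≤ Real.exp (D * Real.log D) := by
    have hc := Nat.le_ceil x
    have hc2 := Nat.ceil_lt_add_one (by linarith : 0 ≤ x)
    have := Real.Gamma_strictMonoOn_Ici.monotoneOn (a := x + 2) (b := ((⌈x⌉₊ + 1 : ℕ) : ℝ) + 1) (by simp; linarith)
      (by push_cast; simp; linarith) (by push_cast; linarith)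
    refine this.trans ?_
    rw [Real.Gamma_nat_eq_factorial]
    have h3 : (((⌈x⌉₊ + 1).factorial : ℕ) : ℝ) ≤ ((⌈x⌉₊ + 1 : ℕ) : ℝ) ^ (⌈x⌉₊ + 1) := by
      exact_mod_cast Nat.factorial_le_pow _
    refine h3.trans ?_
    have hm : ((⌈x⌉₊ + 1 : ℕ) : ℝ) ≤ D := by push_cast; linarith
    have hm1 : (1 : ℝ) ≤ ((⌈x⌉₊ + 1 : ℕ) : ℝ) := by push_cast; linarith
    rw [← Real.rpow_natCast, mul_comm, ← Real.rpow_def_of_pos (by linarith)]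
    refine (Real.rpow_le_rpow (by linarith) hm (by positivity)).trans ?_
    exact Real.rpow_le_rpow_of_exponent_le (by linarith) hm
  have h3 : 0 < Real.Gamma x := Real.Gamma_pos_of_pos (by linarith)
  rw [h1] at h2
  refine le_trans ?_ (mul_le_mul_of_nonneg_left h2 (by norm_num))
  have : 1 ≤ 16 * ((x + 1) * x) := by nlinarith
  nlinarith

noncomputable def xf (s : ℂ) : ℂ := s * (s - 1) * completedRiemannZeta₀ s + 1

lemma xf_diff : Differentiable ℂ xf := by
  have := differentiable_completedZeta₀
  unfold xf
  fun_prop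

lemma xf_one_sub (s : ℂ) : xf (1 - s) = xf s := by
  unfold xf
  rw [completedRiemannZeta₀_one_sub]; ring

lemma xf_eq (s : ℂ) (h0 : s ≠ 0) (h1 : s ≠ 1) : xf s = s * (s - 1) * completedRiemannZeta s := by
  rw [completedRiemannZeta_eq, xf]
  have : 1 - s ≠ 0 := sub_ne_zero.2 (Ne.symm h1)
  field_simp
  ring

lemma completed_eq (s : ℂ) (h : 0 < s.re) : completedRiemannZeta s = Gammaℝ s * riemannZeta s := by
  have h0 : s ≠ 0 := by rintro rfl; simp at h
  rw [riemannZeta_def_of_ne_zero h0]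
  field_simp [Gammaℝ_ne_zero_of_re_pos h]

lemma xf_eq_zeta1 (s : ℂ) (h : 0 < s.re) : xf s = s * Gammaℝ s * riemannZeta₁ s := by
  have h0 : s ≠ 0 := by rintro rfl; simp at h
  by_cases h1 : s = 1
  · subst h1; simp [xf]
  · rw [xf_eq s h0 h1, completed_eq s h, riemannZeta_eq_inv_sub_mul h1]
    have : s - 1 ≠ 0 := sub_ne_zero.2 h1
    field_simp

lemma conj_two : conj (2 : ℂ) = 2 := map_ofNat _ 2

lemma Gammaℝ_conj (s : ℂ) : Gammaℝ (conj s) = conj (Gammaℝ s) := by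
  rw [Gammaℝ_def, Gammaℝ_def, map_mul, ← Complex.Gamma_conj]
  have e : -conj s / 2 = conj (-s / 2) := by simp [conj_two]
  rw [e, Complex.cpow_conj _ _ (by rw [Complex.arg_ofReal_of_nonneg Real.pi_pos.le]; exact Real.pi_pos.ne)]
  simp [conj_two]

lemma completed_conj (s : ℂ) (h : 0 < s.re) : completedRiemannZeta (conj s) = conj (completedRiemannZeta s) := by
  rw [completed_eq s h, completed_eq _ (by simpa using h), Gammaℝ_conj, riemannZeta_conj, map_mul]

lemma xf_conj (s : ℂ) : xf (conj s) = conj (xf s) := by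
  have key : ∀ s : ℂ, 0 < s.re → xf (conj s) = conj (xf s) := by
    intro s h
    by_cases h1 : s = 1
    · subst h1; simp [xf]
    · have h0 : s ≠ 0 := by rintro rfl; simp at h
      rw [xf_eq s h0 h1, xf_eq (conj s) (by simpa using h0) (by intro h; apply h1; simpa using congrArg conj h), completed_conj s h]
      simp
  rcases lt_or_ge 0 s.re with h | h
  · exact key s h
  · have := key (1 - s) (by simp; linarith)
    rw [xf_one_sub] at this
    rw [← this, ← xf_one_sub]
    simp

lemma xf_zero (ρ : ℂ) (h : xf ρ = 0) : completedRiemannZeta ρ = 0 ∧ 0 < ρ.re ∧ ρ.re < 1 := by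
  have h0 : ρ ≠ 0 := by rintro rfl; simp [xf] at h
  have h1 : ρ ≠ 1 := by rintro rfl; simp [xf] at h
  have key : ∀ s : ℂ, xf s = 0 → s.re < 1 := by
    intro s hs
    by_contra hc
    push Not at hc
    have hpos : 0 < s.re := by linarith
    have h0 : s ≠ 0 := by rintro rfl; simp [xf] at hs
    have h1 : s ≠ 1 := by rintro rfl; simp [xf] at hs
    rw [xf_eq s h0 h1, completed_eq s hpos] at hs
    have := riemannZeta_ne_zero_of_one_le_re hc
    have := Gammaℝ_ne_zero_of_re_pos hpos
    have := sub_ne_zero.2 h1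
    simp_all
  refine ⟨?_, ?_, key ρ h⟩
  · rw [xf_eq ρ h0 h1] at h
    have := sub_ne_zero.2 h1
    simp_all
  · have := key (1 - ρ) (by rw [xf_one_sub, h])
    simp at this; exact this

lemma norm_two_cpow_le (w : ℂ) (h : w.re ≤ 1) : ‖((2 : ℕ) : ℂ) ^ w‖ ≤ 2 := by
  rw [Complex.norm_natCast_cpow_of_pos (by norm_num)]
  calc ((2 : ℕ) : ℝ) ^ w.re ≤ ((2 : ℕ) : ℝ) ^ (1 : ℝ) := Real.rpow_le_rpow_of_exponent_le (by norm_num) h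
    _ = 2 := by simp

lemma zeta1_growth (s : ℂ) (h : 0 < s.re) (A : ℝ) (hA : ‖s‖ ≤ A) : ‖riemannZeta₁ s‖ ≤ 4 * (A + 2) ^ 4 := by
  have hA0 : 0 ≤ A := (norm_nonneg s).trans hA
  have hem := em_zeta1 2 le_rfl s h
  have a1 : ‖s - 1‖ ≤ A + 1 := (norm_sub_le _ _).trans (by simpa using hA)
  have a2 : ‖s + 1‖ ≤ A + 1 := (norm_add_le _ _).trans (by simpa using hA)
  have a3 : ‖s + 2‖ ≤ A + 2 := (norm_add_le _ _).trans (by simpa using hA)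
  have hR : ‖(s - 1) * s * (s + 1) * (s + 2)‖ ≤ (A + 1) * A * (A + 1) * (A + 2) := by
    rw [norm_mul, norm_mul, norm_mul]; gcongr
  have hp : (((2 : ℕ) : ℝ)) ^ (-s.re) ≤ 1 :=
    Real.rpow_le_one_of_one_le_of_nonpos (by norm_num) (by linarith)
  have hp0 : 0 ≤ (((2 : ℕ) : ℝ)) ^ (-s.re) := by positivity
  have hem2 : ‖riemannZeta₁ s - emMain 2 s‖ ≤ (A + 1) * A * (A + 1) * (A + 2) := by
    refine hem.trans ?_
    calc _ ≤ (A + 1) * A * (A + 1) * (A + 2) / 120 * 1 * (1 / (2 * ((2 : ℕ) : ℝ) * (((2 : ℕ) : ℝ) - 1))) := by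
          have : 0 ≤ (1 / (2 * ((2 : ℕ) : ℝ) * (((2 : ℕ) : ℝ) - 1))) := by norm_num
          gcongr
      _ ≤ _ := by
        have : 0 ≤ (A + 1) * A * (A + 1) * (A + 2) := by positivity
        norm_num
        linarith
  have hmain : ‖emMain 2 s‖ ≤ (A + 1) + 2 + (A + 1) * (1 + A) := by
    have e : emMain 2 s = (s - 1) + ((2 : ℕ) : ℂ) ^ (1 - s) + (s - 1) * (((2 : ℕ) : ℂ) ^ (-s) / 2 + s * ((2 : ℕ) : ℂ) ^ (-s - 1) / 12) := by
      simp [emMain, emE]; ring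
    have b1 := norm_two_cpow_le (1 - s) (by simp; linarith)
    have b2 := norm_two_cpow_le (-s) (by simp; linarith)
    have b3 := norm_two_cpow_le (-s - 1) (by simp; linarith)
    have c2 : ‖((2 : ℕ) : ℂ) ^ (-s) / 2‖ ≤ 1 := by
      rw [norm_div]; simp only [Complex.norm_ofNat]
      rw [div_le_iff₀ (by norm_num)]
      exact b2.trans (by norm_num)
    have c3 : ‖s * ((2 : ℕ) : ℂ) ^ (-s - 1) / 12‖ ≤ A := by
      rw [norm_div, norm_mul]; simp only [Complex.norm_ofNat]
      rw [div_le_iff₀ (by norm_num)]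
      calc _ ≤ A * 2 := by gcongr
        _ ≤ _ := by linarith
    rw [e]
    refine (norm_add_le _ _).trans (add_le_add ((norm_add_le _ _).trans (add_le_add a1 b1)) ?_)
    rw [norm_mul]
    gcongr
    exact (norm_add_le _ _).trans (add_le_add c2 c3)
  have : ‖riemannZeta₁ s‖ ≤ ‖emMain 2 s‖ + ‖riemannZeta₁ s - emMain 2 s‖ := by
    have := norm_add_le (emMain 2 s) (riemannZeta₁ s - emMain 2 s)
    simpa using this
  have h5 : (A + 1) + 2 + (A + 1) * (1 + A) + (A + 1) * A * (A + 1) * (A + 2) ≤ 4 * (A + 2) ^ 4 := by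
    ring_nf
    have := pow_nonneg hA0 2
    have := pow_nonneg hA0 3
    have := pow_nonneg hA0 4
    nlinarith
  linarith

lemma xf_growth_half (s : ℂ) (h : 1 / 2 ≤ s.re) (D : ℝ) (hD : ‖s‖ + 4 ≤ D) :
    ‖xf s‖ ≤ Real.exp ((D + 8) * Real.log D) := by
  have hD4 : 4 ≤ D := by linarith [norm_nonneg s]
  have hre := (Complex.abs_re_le_norm s)
  have hre' := le_abs_self s.re
  rw [xf_eq_zeta1 s (by linarith), Gammaℝ_def]
  have h1 : ‖(Real.pi : ℂ) ^ (-s / 2)‖ ≤ 1 := by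
    rw [Complex.norm_cpow_eq_rpow_re_of_pos Real.pi_pos]
    refine Real.rpow_le_one_of_one_le_of_nonpos (by linarith [Real.pi_gt_three]) (by simp; linarith)
  have h2 : ‖Complex.Gamma (s / 2)‖ ≤ 16 * Real.exp (D * Real.log D) := by
    have e : (s / 2).re = s.re / 2 := by simp
    refine (norm_Gamma_le (s / 2) (by rw [e]; linarith)).trans ?_
    rw [e]
    exact Gamma_real_bound _ _ (by linarith) (by linarith)
  have h3 := zeta1_growth s (by linarith) (D - 2) (by linarith)
  rw [norm_mul, norm_mul, norm_mul]
  have h4 : ‖s‖ ≤ D := by linarith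
  rw [show D - 2 + 2 = D by ring] at h3
  calc _ ≤ D * (1 * (16 * Real.exp (D * Real.log D))) * (4 * D ^ 4) := by gcongr
    _ = 64 * D ^ 5 * Real.exp (D * Real.log D) := by ring
    _ ≤ D ^ 8 * Real.exp (D * Real.log D) := by
      gcongr
      have : (64 : ℝ) ≤ D ^ 3 := by
        calc (64 : ℝ) = 4 ^ 3 := by norm_num
          _ ≤ D ^ 3 := by gcongr
      calc 64 * D ^ 5 ≤ D ^ 3 * D ^ 5 := by gcongr
        _ = D ^ 8 := by ring
    _ = _ := by
      rw [add_mul, Real.exp_add, mul_comm]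
      congr 1
      rw [mul_comm, Real.exp_mul, Real.exp_log (by linarith)]
      norm_cast

noncomputable def xg (z : ℂ) : ℂ := xf (1 / 2 + z)

lemma xg_diff : Differentiable ℂ xg := by
  have := xf_diff
  unfold xg
  fun_prop

lemma xg_neg (z : ℂ) : xg (-z) = xg z := by
  rw [xg, xg, ← xf_one_sub]; congr 1; ring

lemma xg_conj (z : ℂ) : xg (conj z) = conj (xg z) := by
  rw [xg, xg, ← xf_conj]; congr 1; simp [conj_two]

lemma xg_growth (δ : ℝ) (hδ : δ > 0) : ∃ R0 : ℝ, ∀ R ≥ R0, ∀ z, ‖z‖ ≤ R → ‖xg z‖ ≤ Real.exp (δ * R ^ 2) := by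
  have hlo := Real.isLittleO_log_id_atTop.def (show 0 < δ / 4 by linarith)
  obtain ⟨D0, hD0⟩ := eventually_atTop.1 hlo
  refine ⟨max D0 30, fun R hR z hz => ?_⟩
  have hR1 : D0 ≤ R := (le_max_left _ _).trans hR
  have hR2 : 30 ≤ R := (le_max_right _ _).trans hR
  have h1 : ‖xg z‖ ≤ Real.exp ((R + 5 + 8) * Real.log (R + 5)) := by
    have key : ∀ z : ℂ, ‖z‖ ≤ R → 0 ≤ z.re → ‖xg z‖ ≤ Real.exp ((R + 5 + 8) * Real.log (R + 5)) := by
      intro z hz hz0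
      refine xf_growth_half _ (by simp; linarith) _ ?_
      have := norm_add_le (1 / 2 : ℂ) z
      have e : ‖(1 / 2 : ℂ)‖ = 1 / 2 := by simp
      linarith
    rcases le_total 0 z.re with h | h
    · exact key z hz h
    · rw [← xg_neg]
      exact key (-z) (by simpa using hz) (by simp; linarith)
  refine h1.trans (Real.exp_le_exp.2 ?_)
  have h2 := hD0 (R + 5) (by linarith)
  have h3 := Real.le_norm_self (Real.log (R + 5))
  have h4 : ‖id (R + 5)‖ = R + 5 := by simp; linarith
  rw [h4] at h2
  have h5 : Real.log (R + 5) ≤ δ / 4 * (R + 5) := h3.trans h2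
  calc (R + 5 + 8) * Real.log (R + 5) ≤ (R + 5 + 8) * (δ / 4 * (R + 5)) := by gcongr
    _ = δ * ((R + 5 + 8) * (R + 5) / 4) := by ring
    _ ≤ δ * R ^ 2 := by
      gcongr
      nlinarith

lemma zeta1_half : 0 < (riemannZeta₁ (1 / 2)).re := by
  have hem := em_zeta1 2 le_rfl (1 / 2) (by simp)
  have e1 : emMain 2 (1 / 2) = ((-1 / 2 + (2 : ℝ) ^ (1 / 2 : ℝ) - 1 / 2 * ((2 : ℝ) ^ (-1 / 2 : ℝ) / 2 + 1 / 24 * (2 : ℝ) ^ (-3 / 2 : ℝ)) : ℝ) : ℂ) := by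
    have h (x : ℝ) : (2 : ℂ) ^ (x : ℂ) = (((2 : ℝ) ^ x : ℝ) : ℂ) := by
      rw [Complex.ofReal_cpow (by norm_num)]; norm_num
    have h1 := h (1 / 2)
    have h2 := h (-1 / 2)
    have h3 := h (-3 / 2)
    push_cast at h1 h2 h3
    simp only [emMain, emE]
    push_cast
    rw [show (1 : ℂ) - 1 / 2 = 1 / 2 by norm_num, show -(1 / 2 : ℂ) = -1 / 2 by norm_num,
      show -1 / 2 - (1 : ℂ) = -3 / 2 by norm_num, h1, h2, h3]
    simp
    ring
  have h1 : 1.4 ≤ (2 : ℝ) ^ (1 / 2 : ℝ) := by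
    rw [← Real.sqrt_eq_rpow]
    apply Real.le_sqrt_of_sq_le
    norm_num
  have h2 : (2 : ℝ) ^ (-1 / 2 : ℝ) ≤ 1 := Real.rpow_le_one_of_one_le_of_nonpos (by norm_num) (by norm_num)
  have h3 : (2 : ℝ) ^ (-3 / 2 : ℝ) ≤ 1 := Real.rpow_le_one_of_one_le_of_nonpos (by norm_num) (by norm_num)
  have h4 : ‖((1 / 2 : ℂ) - 1) * (1 / 2) * (1 / 2 + 1) * (1 / 2 + 2)‖ = 15 / 16 := by
    rw [show ((1 / 2 : ℂ) - 1) * (1 / 2) * (1 / 2 + 1) * (1 / 2 + 2) = ((-15 / 16 : ℝ) : ℂ) by push_cast; norm_num,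
      Complex.norm_real]
    norm_num
  have h5 : ((2 : ℕ) : ℝ) ^ (-(1 / 2 : ℂ).re) ≤ 1 :=
    Real.rpow_le_one_of_one_le_of_nonpos (by norm_num) (by norm_num)
  rw [h4, e1] at hem
  have h6 := (Complex.abs_re_le_norm _).trans hem
  rw [abs_le, Complex.sub_re, Complex.ofReal_re] at h6
  have h7 := h6.1
  have h8 : 15 / 16 / 120 * ((2 : ℕ) : ℝ) ^ (-(1 / 2 : ℂ).re) * (1 / (2 * ((2 : ℕ) : ℝ) * (((2 : ℕ) : ℝ) - 1))) ≤ 1 / 100 := by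
    calc _ ≤ 15 / 16 / 120 * 1 * (1 / (2 * ((2 : ℕ) : ℝ) * (((2 : ℕ) : ℝ) - 1))) := by
          have : 0 ≤ (1 / (2 * ((2 : ℕ) : ℝ) * (((2 : ℕ) : ℝ) - 1))) := by norm_num
          gcongr
      _ ≤ _ := by norm_num
  linarith

lemma xf_half_eq : ∃ c : ℝ, 0 < c ∧ xf (1 / 2) = c * riemannZeta₁ (1 / 2) := by
  refine ⟨1 / 2 * (Real.pi ^ (-(1 / 4) : ℝ) * Real.Gamma (1 / 4)), ?_, ?_⟩
  · have := Real.pi_pos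
    have := Real.Gamma_pos_of_pos (s := 1 / 4) (by norm_num)
    positivity
  · rw [xf_eq_zeta1 _ (by simp), Gammaℝ_def]
    push_cast
    rw [Complex.ofReal_cpow Real.pi_pos.le, ← Complex.Gamma_ofReal]
    push_cast
    norm_num

lemma xf_half_pos : 0 < (xf (1 / 2)).re := by
  obtain ⟨c, hc, h⟩ := xf_half_eq
  rw [h, Complex.re_ofReal_mul]
  exact mul_pos hc zeta1_half

lemma xf_half : xf (1 / 2) ≠ 0 := by
  intro h
  have := xf_half_pos
  rw [h] at this
  simp at this

end PC

section PD
open Complex Filter Topology ComplexConjugate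

def qk (a b y : ℝ) : ℝ := ((a - b) ^ 2 + y ^ 2) * ((a + b) ^ 2 + y ^ 2)

lemma qk_poly (b y : ℝ) (hb : b ^ 2 ≤ 1 / 4) (hy : 484 / 9 ≤ y ^ 2) :
    qk (9 / 2) b y * (qk (9 / 2) b y + 3 * qk (5 / 2) b y) * qk (13 / 2) b y ≤
      4 * qk (17 / 2) b y * qk (5 / 2) b y ^ 2 := by
  have e (a : ℝ) : qk a b y = (y ^ 2 + a ^ 2 + b ^ 2) ^ 2 - 4 * a ^ 2 * b ^ 2 := by
    unfold qk; ring
  simp only [e]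
  obtain ⟨v, hv⟩ : ∃ v, y ^ 2 = 484 / 9 + v := ⟨y ^ 2 - 484 / 9, by ring⟩
  have hv0 : 0 ≤ v := by linarith
  have hB0 : 0 ≤ b ^ 2 := sq_nonneg b
  rw [hv]
  generalize b ^ 2 = B at *
  have c0 : 0 ≤ 25651133720510389 / 15116544 + 1633787950996273 / 139968 * B + 1478412065041 / 5832 * B ^ 2
      + B ^ 3 * (364280843 / 162 - 37837 / 3 * B - 100 * B ^ 2) := by
    have : 0 ≤ 364280843 / 162 - 37837 / 3 * B - 100 * B ^ 2 := by nlinarith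
    positivity
  have c1 : 0 ≤ 1255811025625325 / 419904 + 635432858467 / 972 * B + 581481457 / 54 * B ^ 2
      + B ^ 3 * (234260 / 9 - 300 * B) := by
    have : 0 ≤ 234260 / 9 - 300 * B := by nlinarith
    positivity
  have c2 : 0 ≤ 957753726929 / 5832 + 239607109 / 18 * B + B ^ 2 * (360914 / 3 - 200 * B) := by
    have : 0 ≤ 360914 / 3 - 200 * B := by nlinarith
    positivity
  rw [← sub_nonneg]
  have : 0 ≤ (25651133720510389 / 15116544 + 1633787950996273 / 139968 * B + 1478412065041 / 5832 * B ^ 2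
      + B ^ 3 * (364280843 / 162 - 37837 / 3 * B - 100 * B ^ 2))
      + v * (1255811025625325 / 419904 + 635432858467 / 972 * B + 581481457 / 54 * B ^ 2
      + B ^ 3 * (234260 / 9 - 300 * B))
      + v ^ 2 * (957753726929 / 5832 + 239607109 / 18 * B + B ^ 2 * (360914 / 3 - 200 * B))
      + v ^ 3 * (547397045 / 162 + 336220 / 3 * B + 200 * B ^ 2) + v ^ 4 * (273689 / 9 + 300 * B) + 100 * v ^ 5 := by
    have h1 := mul_nonneg hv0 c1
    have h2 := mul_nonneg (pow_nonneg hv0 2) c2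
    have h3 : 0 ≤ v ^ 3 * (547397045 / 162 + 336220 / 3 * B + 200 * B ^ 2) := by positivity
    have h4 : 0 ≤ v ^ 4 * (273689 / 9 + 300 * B) + 100 * v ^ 5 := by positivity
    linarith
  refine le_trans this (le_of_eq ?_)
  ring

lemma qk_pos (a b y : ℝ) (hy : 484 / 9 ≤ y ^ 2) : 0 < qk a b y := by
  have : 0 < y ^ 2 := by linarith
  unfold qk; positivity

lemma qk_ineq (b y : ℝ) (hb : b ^ 2 ≤ 1 / 4) (hy : 484 / 9 ≤ y ^ 2) :
    qk (9 / 2) b y ^ 5 * qk (13 / 2) b y ^ 4 ≤ qk (17 / 2) b y ^ 4 * qk (5 / 2) b y ^ 5 := by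
  have h := qk_poly b y hb hy
  have p1 := qk_pos (9 / 2) b y hy
  have p2 := qk_pos (13 / 2) b y hy
  have p3 := qk_pos (17 / 2) b y hy
  have p4 := qk_pos (5 / 2) b y hy
  generalize qk (9 / 2) b y = u at *
  generalize qk (13 / 2) b y = w at *
  generalize qk (17 / 2) b y = w' at *
  generalize qk (5 / 2) b y = x at *
  have h4 := pow_le_pow_left₀ (by positivity) h 4
  have am : 256 * (u * x ^ 3) ≤ (u + 3 * x) ^ 4 := by
    nlinarith [mul_nonneg (sq_nonneg (u - x)) (by positivity : 0 ≤ u ^ 2 + 14 * u * x + 81 * x ^ 2)]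
  have : 256 * x ^ 3 * (u ^ 5 * w ^ 4) ≤ 256 * x ^ 3 * (w' ^ 4 * x ^ 5) := by
    calc 256 * x ^ 3 * (u ^ 5 * w ^ 4) = u ^ 4 * w ^ 4 * (256 * (u * x ^ 3)) := by ring
      _ ≤ u ^ 4 * w ^ 4 * (u + 3 * x) ^ 4 := by gcongr
      _ = (u * (u + 3 * x) * w) ^ 4 := by ring
      _ ≤ _ := h4
      _ = _ := by ring
  exact le_of_mul_le_mul_left this (by positivity)

noncomputable def Pk (T a : ℝ) (w : ℂ) : ℝ :=
  ‖((a : ℂ) + T * I) ^ 2 - w ^ 2‖ * ‖((a : ℂ) - T * I) ^ 2 - w ^ 2‖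

lemma Pk_sq (T a : ℝ) (w : ℂ) : Pk T a w ^ 2 = qk a w.re (T - w.im) * qk a w.re (T + w.im) := by
  have h1 : ((a : ℂ) + T * I) ^ 2 - w ^ 2 = ((a : ℂ) + T * I - w) * ((a : ℂ) + T * I + w) := by ring
  have h2 : ((a : ℂ) - T * I) ^ 2 - w ^ 2 = ((a : ℂ) - T * I - w) * ((a : ℂ) - T * I + w) := by ring
  rw [Pk, h1, h2, norm_mul, norm_mul, mul_pow, mul_pow, mul_pow, Complex.sq_norm, Complex.sq_norm,
    Complex.sq_norm, Complex.sq_norm]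
  simp only [Complex.normSq_apply, qk]
  simp
  ring

lemma Pk_nonneg (T a : ℝ) (w : ℂ) : 0 ≤ Pk T a w := by unfold Pk; positivity

lemma Pk_ineq (T : ℝ) (w : ℂ) (hb : w.re ^ 2 ≤ 1 / 4) (h1 : 484 / 9 ≤ (T - w.im) ^ 2)
    (h2 : 484 / 9 ≤ (T + w.im) ^ 2) :
    Pk T (9 / 2) w ^ 5 * Pk T (13 / 2) w ^ 4 ≤ Pk T (17 / 2) w ^ 4 * Pk T (5 / 2) w ^ 5 := by
  have n1 := Pk_nonneg T (9 / 2) w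
  have n2 := Pk_nonneg T (13 / 2) w
  have n3 := Pk_nonneg T (17 / 2) w
  have n4 := Pk_nonneg T (5 / 2) w
  refine le_of_pow_le_pow_left₀ (n := 2) two_ne_zero (by positivity) ?_
  have e : ∀ x y : ℝ, (x ^ 5 * y ^ 4) ^ 2 = (x ^ 2) ^ 5 * (y ^ 2) ^ 4 := by intros; ring
  have e' : ∀ x y : ℝ, (x ^ 4 * y ^ 5) ^ 2 = (x ^ 2) ^ 4 * (y ^ 2) ^ 5 := by intros; ring
  rw [e, e', Pk_sq, Pk_sq, Pk_sq, Pk_sq]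
  have i1 := qk_ineq w.re (T - w.im) hb h1
  have i2 := qk_ineq w.re (T + w.im) hb h2
  have := fun a => (qk_pos a w.re (T + w.im) h2).le
  have := fun a => (qk_pos a w.re (T - w.im) h1).le
  have i3 := mul_le_mul i1 i2 (mul_nonneg (pow_nonneg (qk_pos _ _ _ h2).le _) (pow_nonneg (qk_pos _ _ _ h2).le _))
    (mul_nonneg (pow_nonneg (qk_pos _ _ _ h1).le _) (pow_nonneg (qk_pos _ _ _ h1).le _))
  calc _ = _ := by ring
    _ ≤ _ := i3
    _ = _ := by ring

lemma Mk_ineq (T : ℝ) (S : Multiset ℂ) (h : ∀ w ∈ S, w.re ^ 2 ≤ 1 / 4 ∧ 484 / 9 ≤ (T - w.im) ^ 2 ∧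
    484 / 9 ≤ (T + w.im) ^ 2) :
    (S.map (Pk T (9 / 2))).prod ^ 5 * (S.map (Pk T (13 / 2))).prod ^ 4 ≤
     (S.map (Pk T (17 / 2))).prod ^ 4 * (S.map (Pk T (5 / 2))).prod ^ 5 := by
  rw [← Multiset.prod_map_pow, ← Multiset.prod_map_pow, ← Multiset.prod_map_pow, ← Multiset.prod_map_pow,
    ← Multiset.prod_map_mul, ← Multiset.prod_map_mul]
  refine Multiset.prod_map_le_prod_map₀ _ _ (fun w _ => ?_) (fun w hw => ?_)
  · exact mul_nonneg (pow_nonneg (Pk_nonneg _ _ _) _) (pow_nonneg (Pk_nonneg _ _ _) _)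
  · obtain ⟨a, b, c⟩ := h w hw
    exact Pk_ineq T w a b c

lemma G_ineq (T : ℝ) (hz : ∀ ρ, xf ρ = 0 → 22 / 3 ≤ |ρ.im - T|) :
    ‖xg (((9 / 2 : ℝ) : ℂ) + T * I)‖ ^ 5 * ‖xg (((13 / 2 : ℝ) : ℂ) + T * I)‖ ^ 4 ≤
    ‖xg (((17 / 2 : ℝ) : ℂ) + T * I)‖ ^ 4 * ‖xg (((5 / 2 : ℝ) : ℂ) + T * I)‖ ^ 5 := by
  set G : ℝ → ℝ := fun a => ‖xg ((a : ℂ) + T * I)‖ with hG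
  have hG0 : ∀ a, 0 ≤ G a := fun a => norm_nonneg _
  have key : ∀ ε > 0, (G (9 / 2) ^ 5 * G (13 / 2) ^ 4) ^ 4 ≤ Real.exp (36 * ε) * (G (17 / 2) ^ 4 * G (5 / 2) ^ 5) ^ 4 := by
    intro ε hε
    obtain ⟨S, c, hc, hS, hprod⟩ := hadamard xg_diff (by simpa [xg] using xf_half) xg_growth (9 + |T|) (by positivity) ε hε
    have hM := Mk_ineq T S (by
      intro w hw
      have h0 := hS w hw
      obtain ⟨-, r1, r2⟩ := xf_zero _ h0
      have i1 := hz _ h0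
      have h0' : xf (conj (1 / 2 + w)) = 0 := by
        rw [xf_conj]; rw [xg] at h0; rw [h0]; simp
      have i2 := hz _ h0'
      simp only [Complex.add_re, Complex.add_im, Complex.conj_im] at r1 r2 i1 i2
      norm_num at r1 r2 i1 i2
      refine ⟨by nlinarith, ?_, ?_⟩
      · have := pow_le_pow_left₀ (by norm_num) i1 2
        rw [sq_abs] at this
        nlinarith
      · have := pow_le_pow_left₀ (by norm_num) i2 2
        rw [sq_abs] at this
        nlinarith)
    have hGM : ∀ a : ℝ, 0 ≤ a → a ≤ 9 → ∃ θ : ℝ, |θ| ≤ 2 * ε ∧ G a ^ 4 = c ^ 2 * Real.exp θ * (S.map (Pk T a)).prod := by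
      intro a ha ha'
      have hn : ‖(T : ℂ) * I‖ = |T| := by simp
      have hna : ‖(a : ℂ)‖ = a := by rw [Complex.norm_real, Real.norm_eq_abs, abs_of_nonneg ha]
      obtain ⟨η1, hη1, e1⟩ := hprod ((a : ℂ) + T * I) ((norm_add_le _ _).trans (by rw [hn, hna]; linarith))
      obtain ⟨η2, hη2, e2⟩ := hprod ((a : ℂ) - T * I) ((norm_sub_le _ _).trans (by rw [hn, hna]; linarith))
      have ec : (a : ℂ) - T * I = conj ((a : ℂ) + T * I) := by simp [sub_eq_add_neg]
      rw [xg_neg] at e1 e2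
      have en : ‖xg ((a : ℂ) - T * I)‖ = G a := by rw [ec, xg_conj, RCLike.norm_conj]
      rw [en] at e2
      refine ⟨η1 + η2, (abs_add_le _ _).trans (by linarith), ?_⟩
      have e3 : (S.map (Pk T a)).prod = (S.map (fun w => ‖((a : ℂ) + T * I) ^ 2 - w ^ 2‖)).prod *
          (S.map (fun w => ‖((a : ℂ) - T * I) ^ 2 - w ^ 2‖)).prod := by
        rw [← Multiset.prod_map_mul]; rfl
      rw [e3, Real.exp_add]
      calc G a ^ 4 = (G a * G a) * (G a * G a) := by ring
        _ = _ := by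
          change G a * G a = _ at e1
          nth_rewrite 1 [e1]
          rw [e2]; ring
    have hM0 : ∀ a : ℝ, 0 ≤ (S.map (Pk T a)).prod := fun a => Multiset.prod_nonneg (by
      intro x hx
      obtain ⟨w, _, rfl⟩ := Multiset.mem_map.1 hx
      exact Pk_nonneg _ _ _)
    obtain ⟨θ1, b1, e1⟩ := hGM (9 / 2) (by norm_num) (by norm_num)
    obtain ⟨θ2, b2, e2⟩ := hGM (13 / 2) (by norm_num) (by norm_num)
    obtain ⟨θ3, b3, e3⟩ := hGM (17 / 2) (by norm_num) (by norm_num)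
    obtain ⟨θ4, b4, e4⟩ := hGM (5 / 2) (by norm_num) (by norm_num)
    have r : ∀ x y : ℝ, (x ^ 5 * y ^ 4) ^ 4 = (x ^ 4) ^ 5 * (y ^ 4) ^ 4 := by intros; ring
    have r' : ∀ x y : ℝ, (x ^ 4 * y ^ 5) ^ 4 = (x ^ 4) ^ 4 * (y ^ 4) ^ 5 := by intros; ring
    rw [r, r', e1, e2, e3, e4]
    have E1 : ∀ x : ℝ, Real.exp x ^ 5 = Real.exp (5 * x) := fun x => by rw [← Real.exp_nat_mul]; norm_num
    have E2 : ∀ x : ℝ, Real.exp x ^ 4 = Real.exp (4 * x) := fun x => by rw [← Real.exp_nat_mul]; norm_num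
    rw [abs_le] at b1 b2 b3 b4
    calc (c ^ 2 * Real.exp θ1 * (S.map (Pk T (9 / 2))).prod) ^ 5 * (c ^ 2 * Real.exp θ2 * (S.map (Pk T (13 / 2))).prod) ^ 4
        = c ^ 18 * Real.exp (5 * θ1 + 4 * θ2) * ((S.map (Pk T (9 / 2))).prod ^ 5 * (S.map (Pk T (13 / 2))).prod ^ 4) := by
          rw [Real.exp_add, ← E1, ← E2]; ring
      _ ≤ c ^ 18 * Real.exp (36 * ε + (4 * θ3 + 5 * θ4)) * ((S.map (Pk T (17 / 2))).prod ^ 4 * (S.map (Pk T (5 / 2))).prod ^ 5) := by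
          have := mul_nonneg (pow_nonneg (hM0 (9 / 2)) 5) (pow_nonneg (hM0 (13 / 2)) 4)
          exact mul_le_mul (mul_le_mul_of_nonneg_left (Real.exp_le_exp.2 (by linarith)) (by positivity)) hM this
            (by positivity)
      _ = _ := by
          rw [Real.exp_add, Real.exp_add, ← E1, ← E2]; ring
  have lim : Tendsto (fun ε : ℝ => Real.exp (36 * ε) * (G (17 / 2) ^ 4 * G (5 / 2) ^ 5) ^ 4) (𝓝[>] 0)
      (𝓝 (Real.exp (36 * 0) * (G (17 / 2) ^ 4 * G (5 / 2) ^ 5) ^ 4)) := by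
    refine tendsto_nhdsWithin_of_tendsto_nhds ?_
    exact Continuous.tendsto (by fun_prop) 0
  have h := ge_of_tendsto lim (eventually_nhdsWithin_of_forall key)
  simp only [mul_zero, Real.exp_zero, one_mul] at h
  have := hG0
  exact le_of_pow_le_pow_left₀ (by norm_num) (mul_nonneg (pow_nonneg (hG0 _) _) (pow_nonneg (hG0 _) _)) h

lemma zeta_near_one (k : ℕ) (hk : 3 ≤ k) (s : ℂ) (hs : s.re = k) :
    ‖riemannZeta s - 1‖ ≤ 1 / 2 ^ k + 1 / (12 * 3 ^ (k - 3)) := by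
  have hk' : (3 : ℝ) ≤ k := by exact_mod_cast hk
  have hs1 : 1 < s.re := by rw [hs]; linarith
  have hsm : Summable (fun n : ℕ => 1 / ((n : ℂ) + 1) ^ s) := by
    have := (summable_nat_add_iff 1).2 (Complex.summable_one_div_nat_cpow.2 hs1)
    simpa using this
  have hn : ∀ m : ℕ, 1 ≤ m → ‖1 / (m : ℂ) ^ s‖ = 1 / (m : ℝ) ^ k := by
    intro m hm
    rw [norm_div, norm_one, Complex.norm_natCast_cpow_of_pos (by omega), hs, Real.rpow_natCast]
  have e := hsm.sum_add_tsum_nat_add 2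
  rw [← zeta_eq_tsum_one_div_nat_add_one_cpow hs1] at e
  rw [← e, Finset.sum_range_succ, Finset.sum_range_one]
  have e2 : (1 : ℂ) / (((0 : ℕ) : ℂ) + 1) ^ s = 1 := by simp
  rw [e2]
  have e3 : ∀ x y : ℂ, 1 + x + y - 1 = x + y := by intros; ring
  rw [e3]
  refine (norm_add_le _ _).trans (add_le_add ?_ ?_)
  · have := hn 2 (by norm_num)
    push_cast at this ⊢
    rw [show (1 : ℂ) + 1 = 2 by norm_num, this]
  · refine (tsum_of_norm_bounded ((cube_summable 3 (by norm_num)).mul_left (1 / 3 ^ (k - 3))).hasSum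
      (fun n => ?_)).trans ?_
    · have := hn (3 + n) (by omega)
      have e4 : (((n + 2 : ℕ) : ℂ) + 1) = ((3 + n : ℕ) : ℂ) := by push_cast; ring
      rw [e4, this]
      obtain ⟨j, rfl⟩ : ∃ j, k = j + 3 := ⟨k - 3, by omega⟩
      rw [Nat.add_sub_cancel, pow_add, ← one_div_mul_one_div]
      have h3 : (3 : ℝ) ≤ ((3 + n : ℕ) : ℝ) := by push_cast; linarith [(Nat.cast_nonneg n : (0 : ℝ) ≤ n)]
      gcongr
    · rw [tsum_mul_left]
      have := cube_tsum 3 (by norm_num)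
      calc _ ≤ 1 / 3 ^ (k - 3) * (1 / (2 * ((3 : ℕ) : ℝ) * (((3 : ℕ) : ℝ) - 1))) := by gcongr
        _ = _ := by norm_num

lemma xf_step (s : ℂ) (h : 1 < s.re) :
    ‖xf (s + 2)‖ * (2 * Real.pi * ‖s - 1‖ * ‖riemannZeta s‖) = ‖xf s‖ * (‖s + 2‖ * ‖s + 1‖ * ‖riemannZeta (s + 2)‖) := by
  have h0 : s ≠ 0 := by rintro rfl; simp at h; linarith
  have h1 : s ≠ 1 := by rintro rfl; simp at h
  have h2 : s + 2 ≠ 0 := by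
    intro hh
    have := congrArg Complex.re hh
    simp at this; linarith
  have h3 : s + 2 ≠ 1 := by
    intro hh
    have := congrArg Complex.re hh
    simp at this; linarith
  have hpi : (Real.pi : ℂ) ≠ 0 := by exact_mod_cast Real.pi_ne_zero
  have e : xf (s + 2) * (2 * Real.pi * (s - 1) * riemannZeta s) = xf s * ((s + 2) * (s + 1) * riemannZeta (s + 2)) := by
    rw [xf_eq _ h2 h3, xf_eq _ h0 h1, completed_eq _ (by simp; linarith), completed_eq _ (by linarith), Gammaℝ_add_two h0]
    field_simp
    ring
  have e' := congrArg norm e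
  simp only [norm_mul, Complex.norm_ofNat, Complex.norm_real, Real.norm_eq_abs, abs_of_pos Real.pi_pos] at e'
  exact e'

lemma window_poly (T : ℝ) (hT : 29.33 ≤ T) : (81 + T ^ 2) * (64 + T ^ 2) ≤ 1.13 * T ^ 2 * (36 + T ^ 2) := by
  have hT2 : 860 ≤ T ^ 2 := by nlinarith
  generalize T ^ 2 = x at *
  nlinarith

set_option maxHeartbeats 1000000 in
lemma window (T : ℝ) (hT : 29.33 ≤ T) : ∃ ρ, xf ρ = 0 ∧ |ρ.im - T| < 22 / 3 := by
  by_contra hcon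
  push Not at hcon
  have hG := G_ineq T hcon
  set s : ℂ := 3 + T * I with hs
  set s' : ℂ := 7 + T * I with hs'
  have x1 : xg (((5 / 2 : ℝ) : ℂ) + T * I) = xf s := by rw [xg, hs]; congr 1; push_cast; ring
  have x2 : xg (((9 / 2 : ℝ) : ℂ) + T * I) = xf (s + 2) := by rw [xg, hs]; congr 1; push_cast; ring
  have x3 : xg (((13 / 2 : ℝ) : ℂ) + T * I) = xf s' := by rw [xg, hs']; congr 1; push_cast; ring
  have x4 : xg (((17 / 2 : ℝ) : ℂ) + T * I) = xf (s' + 2) := by rw [xg, hs']; congr 1; push_cast; ring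
  rw [x1, x2, x3, x4] at hG
  have re1 : s.re = 3 := by simp [hs]
  have re2 : s'.re = 7 := by simp [hs']
  have st1 := xf_step s (by rw [re1]; norm_num)
  have st2 := xf_step s' (by rw [re2]; norm_num)
  have z1 := zeta_near_one 3 le_rfl s (by rw [re1]; norm_num)
  have z2 := zeta_near_one 5 (by norm_num) (s + 2) (by simp [re1]; norm_num)
  have z3 := zeta_near_one 7 (by norm_num) s' (by rw [re2]; norm_num)
  have z4 := zeta_near_one 9 (by norm_num) (s' + 2) (by simp [re2]; norm_num)
  norm_num at z1 z2 z3 z4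
  have up : ∀ w : ℂ, ‖w‖ ≤ 1 + ‖w - 1‖ := fun w => by
    have := norm_add_le 1 (w - 1); simpa using this
  have lo : ∀ w : ℂ, 1 - ‖w - 1‖ ≤ ‖w‖ := fun w => by
    have := norm_sub_le w (w - 1)
    simp at this; linarith
  have u1 : ‖riemannZeta s‖ ≤ 1.209 := (up _).trans (by linarith)
  have u2 : 0.959 ≤ ‖riemannZeta (s + 2)‖ := le_trans (by linarith) (lo _)
  have u3 : 0.9911 ≤ ‖riemannZeta s'‖ := le_trans (by linarith) (lo _)
  have u4 : ‖riemannZeta (s' + 2)‖ ≤ 1.0021 := (up _).trans (by linarith)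
  have nz : ∀ w : ℂ, 1 ≤ w.re → 0 < ‖xf w‖ := by
    intro w hw
    rw [norm_pos_iff]
    intro h
    have := (xf_zero w h).2.2
    linarith
  have p1 := nz s (by rw [re1]; norm_num)
  have p2 := nz s' (by rw [re2]; norm_num)
  have nrm : ∀ (a : ℝ), ‖(a : ℂ) + T * I‖ ^ 2 = a ^ 2 + T ^ 2 := by
    intro a
    rw [Complex.sq_norm, Complex.normSq_apply]; simp; ring
  have m1 : ‖s - 1‖ ^ 2 = 4 + T ^ 2 := by
    have := nrm 2
    rw [show ((2 : ℝ) : ℂ) + T * I = s - 1 by rw [hs]; push_cast; ring] at this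
    rw [this]; norm_num
  have m2 : ‖s + 1‖ ^ 2 = 16 + T ^ 2 := by
    have := nrm 4
    rw [show ((4 : ℝ) : ℂ) + T * I = s + 1 by rw [hs]; push_cast; ring] at this
    rw [this]; norm_num
  have m3 : ‖s + 2‖ ^ 2 = 25 + T ^ 2 := by
    have := nrm 5
    rw [show ((5 : ℝ) : ℂ) + T * I = s + 2 by rw [hs]; push_cast; ring] at this
    rw [this]; norm_num
  have m4 : ‖s' - 1‖ ^ 2 = 36 + T ^ 2 := by
    have := nrm 6
    rw [show ((6 : ℝ) : ℂ) + T * I = s' - 1 by rw [hs']; push_cast; ring] at this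
    rw [this]; norm_num
  have m5 : ‖s' + 1‖ ^ 2 = 64 + T ^ 2 := by
    have := nrm 8
    rw [show ((8 : ℝ) : ℂ) + T * I = s' + 1 by rw [hs']; push_cast; ring] at this
    rw [this]; norm_num
  have m6 : ‖s' + 2‖ ^ 2 = 81 + T ^ 2 := by
    have := nrm 9
    rw [show ((9 : ℝ) : ℂ) + T * I = s' + 2 by rw [hs']; push_cast; ring] at this
    rw [this]; norm_num
  have hT0 : 0 < T := by linarith
  have n1 : ‖s - 1‖ ≤ ‖s + 1‖ := le_of_pow_le_pow_left₀ (n := 2) two_ne_zero (norm_nonneg _) (by rw [m1, m2]; linarith)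
  have n2 : T ≤ ‖s + 2‖ := le_of_pow_le_pow_left₀ (n := 2) two_ne_zero (norm_nonneg _) (by rw [m3]; linarith)
  have q1 : 0 < ‖s - 1‖ := by
    rw [norm_pos_iff]; intro h; rw [h] at m1; simp at m1; nlinarith
  have q2 : 0 < ‖s' - 1‖ := by
    rw [norm_pos_iff]; intro h; rw [h] at m4; simp at m4; nlinarith
  set X := T / (2 * Real.pi) with hX
  have hX0 : 0 < X := by have := Real.pi_pos; positivity
  have hXT : T = X * (2 * Real.pi) := by rw [hX]; field_simp
  have hX1 : 4.667 ≤ X := by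
    rw [hX, le_div_iff₀ (by have := Real.pi_pos; positivity)]
    have := Real.pi_lt_d4
    linarith
  -- lower bound for first ratio
  have L1 : ‖xf s‖ * (X * (0.959 / 1.209)) ≤ ‖xf (s + 2)‖ := by
    have hz : 0 < ‖riemannZeta s‖ := by
      have := lo (riemannZeta s)
      linarith
    have hq : 0 < 2 * Real.pi * ‖s - 1‖ * ‖riemannZeta s‖ := by have := Real.pi_pos; positivity
    refine le_of_mul_le_mul_right ?_ hq
    rw [st1, mul_assoc]
    refine mul_le_mul_of_nonneg_left ?_ (norm_nonneg _)
    calc X * (0.959 / 1.209) * (2 * Real.pi * ‖s - 1‖ * ‖riemannZeta s‖)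
        = T * ‖s - 1‖ * 0.959 * (‖riemannZeta s‖ / 1.209) := by rw [hXT]; ring
      _ ≤ T * ‖s - 1‖ * 0.959 * 1 := by
          gcongr
          rw [div_le_one (by norm_num)]
          exact u1
      _ ≤ ‖s + 2‖ * ‖s + 1‖ * ‖riemannZeta (s + 2)‖ := by
          rw [mul_one]; gcongr
  have L2 : ‖xf (s' + 2)‖ ^ 2 ≤ ‖xf s'‖ ^ 2 * (X ^ 2 * (1.13 * (1.0021 / 0.9911) ^ 2)) := by
    have hz : 0 < ‖riemannZeta s'‖ := by linarith
    have hq : 0 < (2 * Real.pi * ‖s' - 1‖ * ‖riemannZeta s'‖) ^ 2 := by have := Real.pi_pos; positivity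
    refine le_of_mul_le_mul_right ?_ hq
    rw [← mul_pow, st2, mul_pow, mul_assoc (‖xf s'‖ ^ 2)]
    refine mul_le_mul_of_nonneg_left ?_ (sq_nonneg _)
    have hsq : (81 + T ^ 2) * (64 + T ^ 2) ≤ 1.13 * T ^ 2 * (36 + T ^ 2) := window_poly T hT
    calc (‖s' + 2‖ * ‖s' + 1‖ * ‖riemannZeta (s' + 2)‖) ^ 2
        = (81 + T ^ 2) * (64 + T ^ 2) * ‖riemannZeta (s' + 2)‖ ^ 2 := by rw [mul_pow, mul_pow, m5, m6]
      _ ≤ 1.13 * T ^ 2 * (36 + T ^ 2) * 1.0021 ^ 2 := by gcongr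
      _ ≤ 1.13 * T ^ 2 * (36 + T ^ 2) * (1.0021 / 0.9911 * ‖riemannZeta s'‖) ^ 2 := by
          gcongr
          rw [div_mul_eq_mul_div, le_div_iff₀ (by norm_num)]
          gcongr
      _ = _ := by
          rw [← m4, hXT]; ring
  have L3 : ‖xf (s' + 2)‖ ^ 4 ≤ ‖xf s'‖ ^ 4 * (X ^ 4 * (1.13 * (1.0021 / 0.9911) ^ 2) ^ 2) := by
    have := pow_le_pow_left₀ (by positivity) L2 2
    calc _ = (‖xf (s' + 2)‖ ^ 2) ^ 2 := by ring
      _ ≤ _ := this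
      _ = _ := by ring
  have L4 := pow_le_pow_left₀ (by positivity) L1 5
  have F : ‖xf s‖ ^ 5 * ‖xf s'‖ ^ 4 * X ^ 4 * (X * (0.959 / 1.209) ^ 5) ≤
      ‖xf s‖ ^ 5 * ‖xf s'‖ ^ 4 * X ^ 4 * (1.13 * (1.0021 / 0.9911) ^ 2) ^ 2 := by
    calc _ = (‖xf s‖ * (X * (0.959 / 1.209))) ^ 5 * ‖xf s'‖ ^ 4 := by ring
      _ ≤ ‖xf (s + 2)‖ ^ 5 * ‖xf s'‖ ^ 4 := by gcongr
      _ ≤ _ := hG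
      _ ≤ ‖xf s'‖ ^ 4 * (X ^ 4 * (1.13 * (1.0021 / 0.9911) ^ 2) ^ 2) * ‖xf s‖ ^ 5 := by gcongr
      _ = _ := by ring
  have F2 := le_of_mul_le_mul_left F (by positivity)
  have F3 : (4.667 : ℝ) * (0.959 / 1.209) ^ 5 ≤ (1.13 * (1.0021 / 0.9911) ^ 2) ^ 2 :=
    le_trans (mul_le_mul_of_nonneg_right hX1 (by norm_num)) F2
  norm_num at F3

end PD

section PE
open Complex

lemma re_cpow_half (n : ℕ) (hn : 0 < n) (t : ℝ) :
    (((n : ℕ) : ℂ) ^ (-(1 / 2 + t * I : ℂ))).re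
      = (Real.sqrt n)⁻¹ * Real.cos (t * Real.log n) := by
  have hn' : (n : ℂ) ≠ 0 := by exact_mod_cast hn.ne'
  have hnp : (0 : ℝ) < n := by exact_mod_cast hn
  rw [cpow_def_of_ne_zero hn', exp_re]
  have e : Complex.log n * (-(1 / 2 + t * I : ℂ))
      = ((-(Real.log n / 2) : ℝ) : ℂ) + ((-(t * Real.log n) : ℝ) : ℂ) * I := by
    rw [← Complex.natCast_log]
    push_cast
    ring
  rw [e]
  have h1 : (((-(Real.log n / 2) : ℝ) : ℂ) + ((-(t * Real.log n) : ℝ) : ℂ) * I).re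
    = -(Real.log n / 2) := by
    rw [add_re, re_ofReal_mul, ofReal_re, I_re, mul_zero, add_zero]
  have h2 : (((-(Real.log n / 2) : ℝ) : ℂ) + ((-(t * Real.log n) : ℝ) : ℂ) * I).im
    = -(t * Real.log n) := by
    rw [add_im, im_ofReal_mul, ofReal_im, I_im, mul_one, zero_add]
  rw [h1, h2, Real.cos_neg, Real.exp_neg]
  congr 2
  rw [← Real.log_sqrt hnp.le, Real.exp_log (Real.sqrt_pos.2 hnp)]

lemma norm_half_le (t k c : ℝ) (ht : 17 ≤ t) (hc : 0 ≤ c) (hk : (1 / 2 + k) ^ 2 ≤ 34 * c) :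
    ‖(1 / 2 + t * I : ℂ) + k‖ ≤ t + c := by
  have : (1 / 2 + t * I : ℂ) + k = ((1 / 2 + k : ℝ) : ℂ) + (t : ℂ) * I := by
    push_cast; ring
  rw [this, norm_add_mul_I]
  apply Real.sqrt_le_iff.2
  constructor
  · linarith
  · nlinarith

lemma re_zeta_ge (t : ℝ) (ht : 17 ≤ t) :
    ∑ n ∈ Finset.range 7, (Real.sqrt ((n + 1 : ℕ) : ℝ))⁻¹ * Real.cos (t * Real.log ((n + 1 : ℕ) : ℝ))
      - (0.3536 : ℝ) * (8 / t + 1 / 2 + (t + 0.01) / 96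
        + (t + 0.01) * (t + 0.07) * (t + 0.19) / 13440)
      ≤ (riemannZeta (1 / 2 + t * I)).re := by
  set s : ℂ := 1 / 2 + t * I with hs
  have hre : s.re = 1 / 2 := by simp [hs]
  have him : s.im = t := by simp [hs]
  have hs1 : s ≠ 1 := by
    intro h
    rw [h] at hre; norm_num at hre
  have h := em_zeta 8 (by norm_num) s (by rw [hre]; norm_num) hs1
  have hq : ∃ q : ℝ, q = (8 : ℝ) ^ (-(1 / 2) : ℝ) ∧ 0 < q ∧ q ≤ 0.3536 := by
    refine ⟨_, rfl, by positivity, ?_⟩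
    rw [Real.rpow_neg (by norm_num), ← Real.sqrt_eq_rpow]
    have : (2.8283 : ℝ) ≤ √8 := Real.le_sqrt_of_sq_le (by norm_num)
    calc (√8)⁻¹ ≤ (2.8283 : ℝ)⁻¹ := by gcongr
      _ ≤ _ := by norm_num
  obtain ⟨q, hq, hq0, hq1⟩ := hq
  have n0 : ‖s‖ ≤ t + 0.01 := by
    have := norm_half_le t 0 0.01 ht (by norm_num) (by norm_num)
    rw [← hs] at this
    simpa only [ofReal_zero, ofReal_one, ofReal_ofNat, add_zero] using this
  have n1 : ‖s + 1‖ ≤ t + 0.07 := by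
    have := norm_half_le t 1 0.07 ht (by norm_num) (by norm_num)
    rw [← hs] at this
    simpa only [ofReal_zero, ofReal_one, ofReal_ofNat, add_zero] using this
  have n2 : ‖s + 2‖ ≤ t + 0.19 := by
    have := norm_half_le t 2 0.19 ht (by norm_num) (by norm_num)
    rw [← hs] at this
    simpa only [ofReal_zero, ofReal_one, ofReal_ofNat, add_zero] using this
  have nm : t ≤ ‖s - 1‖ := by
    have := abs_im_le_norm (s - 1)
    simp [him] at this
    exact (le_abs_self t).trans this
  have c1 : ‖((8 : ℕ) : ℂ) ^ (-s)‖ = q := by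
    rw [norm_natCast_cpow_of_pos (by norm_num), hq, neg_re, hre]; norm_num
  have c2 : ‖((8 : ℕ) : ℂ) ^ (1 - s)‖ = 8 * q := by
    rw [sub_eq_add_neg, cpow_add _ _ (by norm_num), norm_mul, c1]; simp
  have c3 : ‖((8 : ℕ) : ℂ) ^ (-s - 1)‖ = q / 8 := by
    rw [cpow_sub _ _ (by norm_num), norm_div, c1]; simp
  have t1 : ‖((8 : ℕ) : ℂ) ^ (1 - s) / (s - 1)‖ ≤ 8 * q / t := by
    rw [norm_div, c2]; gcongr
  have t2 : ‖((8 : ℕ) : ℂ) ^ (-s) / 2‖ ≤ q / 2 := by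
    rw [norm_div, c1]; simp
  have t3 : ‖s * ((8 : ℕ) : ℂ) ^ (-s - 1) / 12‖ ≤ (t + 0.01) * (q / 8) / 12 := by
    rw [norm_div, norm_mul, c3]
    have : ‖(12 : ℂ)‖ = 12 := by simp
    rw [this]
    gcongr
  have t4 : ‖s * (s + 1) * (s + 2)‖ / 120 * ((8 : ℕ) : ℝ) ^ (-s.re) * (1 / (2 * ((8 : ℕ) : ℝ) * ((8 : ℕ) - 1)))
      ≤ (t + 0.01) * (t + 0.07) * (t + 0.19) / 120 * q * (1 / 112) := by
    have e : ((8 : ℕ) : ℝ) ^ (-s.re) = q := by rw [hre, hq]; norm_num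
    rw [e, norm_mul, norm_mul]
    have : (1 / (2 * ((8 : ℕ) : ℝ) * ((8 : ℕ) - 1)) : ℝ) = 1 / 112 := by norm_num
    rw [this]
    gcongr
  have h' := h.trans t4
  set S := ∑ n ∈ Finset.range (8 - 1), ((n + 1 : ℕ) : ℂ) ^ (-s) with hS
  have hSre : S.re = ∑ n ∈ Finset.range 7, (Real.sqrt ((n + 1 : ℕ) : ℝ))⁻¹ * Real.cos (t * Real.log ((n + 1 : ℕ) : ℝ)) := by
    rw [hS, re_sum]
    exact Finset.sum_congr rfl fun n _ => re_cpow_half (n + 1) (by omega) t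
  rw [← hSre]
  have r0 := (abs_le.1 ((abs_re_le_norm _).trans h')).1
  have r1 := (abs_le.1 ((abs_re_le_norm _).trans t1)).1
  have r2 := (abs_le.1 ((abs_re_le_norm _).trans t2)).1
  have r3 := (abs_le.1 ((abs_re_le_norm _).trans t3)).1
  simp only [sub_re, add_re] at r0
  have key : q * (8 / t + 1 / 2 + (t + 0.01) / 96
        + (t + 0.01) * (t + 0.07) * (t + 0.19) / 13440) ≤ (0.3536 : ℝ) * (8 / t + 1 / 2 + (t + 0.01) / 96
        + (t + 0.01) * (t + 0.07) * (t + 0.19) / 13440) := by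
    gcongr
  have e : q * (8 / t + 1 / 2 + (t + 0.01) / 96
        + (t + 0.01) * (t + 0.07) * (t + 0.19) / 13440)
      = 8 * q / t + q / 2 + (t + 0.01) * (q / 8) / 12
       + (t + 0.01) * (t + 0.07) * (t + 0.19) / 120 * q * (1 / 112) := by
    ring
  linarith

lemma log7 : (1.9458 : ℝ) < Real.log 7 ∧ Real.log 7 < 1.9460 := by
  have h2 := Real.log_two_gt_d9
  have h2' := Real.log_two_lt_d9
  have h3 := Real.log_three_gt_d9
  have h3' := Real.log_three_lt_d9
  have h5 := Real.log_five_gt_d9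
  have h5' := Real.log_five_lt_d9
  -- `7 ^ 4 = 2401`, near `2400 = 2 ^ 5 * 3 * 5 ^ 2`
  have e : Real.log 2400 = 5 * Real.log 2 + Real.log 3 + 2 * Real.log 5 := by
    rw [show (2400 : ℝ) = 2 ^ 5 * 3 * 5 ^ 2 by norm_num, Real.log_mul (by norm_num) (by norm_num),
      Real.log_mul (by norm_num) (by norm_num), Real.log_pow, Real.log_pow]
    norm_num
  have e' : Real.log 2401 = 4 * Real.log 7 := by
    rw [show (2401 : ℝ) = 7 ^ 4 by norm_num, Real.log_pow]
    norm_num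
  have l1 : Real.log 2400 < Real.log 2401 := Real.log_lt_log (by norm_num) (by norm_num)
  have l2 : Real.log 2401 - Real.log 2400 ≤ 1 / 2400 := by
    rw [← Real.log_div (by norm_num) (by norm_num)]
    have := Real.log_le_sub_one_of_pos (show (0 : ℝ) < 2401 / 2400 by norm_num)
    norm_num at this ⊢
    linarith
  constructor <;> linarith

lemma log4 : Real.log 4 = 2 * Real.log 2 := by
  rw [show (4 : ℝ) = 2 ^ 2 by norm_num, Real.log_pow]; norm_num
lemma log6 : Real.log 6 = Real.log 2 + Real.log 3 := by
  rw [show (6 : ℝ) = 2 * 3 by norm_num, Real.log_mul (by norm_num) (by norm_num)]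

/-- `cos (x)` with `x = k π/2 + r`, `k ≡ 3`. -/
lemma cos_q3 (x a : ℝ) (m : ℕ) (ha : |a| ≤ 1) (h1 : a ≤ x - (4 * m + 3) * (Real.pi / 2))
    (h2 : x - (4 * m + 3) * (Real.pi / 2) ≤ 1) :
    a - a ^ 3 / 6 - |a| ^ 5 / 100 ≤ Real.cos x := by
  have e : Real.cos x = Real.sin (x - (4 * m + 3) * (Real.pi / 2)) := by
    have := Real.sin_sub_nat_mul_two_pi (x - 3 * (Real.pi / 2)) m
    rw [show x - (4 * m + 3) * (Real.pi / 2) = x - 3 * (Real.pi / 2) - m * (2 * Real.pi) by ring,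
      this, show x - 3 * (Real.pi / 2) = x + Real.pi / 2 - 2 * Real.pi by ring,
      Real.sin_sub_two_pi, Real.sin_add_pi_div_two]
  rw [e]
  have hp := Real.pi_gt_three
  have := (abs_le.1 (Real.sin_bound ha)).1
  have hm : Real.sin a ≤ Real.sin (x - (4 * m + 3) * (Real.pi / 2)) :=
    Real.sin_le_sin_of_le_of_le_pi_div_two (by linarith [(abs_le.1 ha).1]) (by linarith) h1
  linarith

lemma cos_q1 (x b : ℝ) (m : ℕ) (hb : |b| ≤ 1) (h1 : -1 ≤ x - (4 * m + 1) * (Real.pi / 2))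
    (h2 : x - (4 * m + 1) * (Real.pi / 2) ≤ b) :
    -(b - b ^ 3 / 6 + |b| ^ 5 / 100) ≤ Real.cos x := by
  have := cos_q3 (-x) (-b) 0 (by simpa using hb)
  have e : Real.cos x = -Real.sin (x - (4 * m + 1) * (Real.pi / 2)) := by
    have := Real.sin_sub_nat_mul_two_pi (x - (Real.pi / 2)) m
    rw [show x - (4 * m + 1) * (Real.pi / 2) = x - (Real.pi / 2) - m * (2 * Real.pi) by ring,
      this, Real.sin_sub_pi_div_two, neg_neg]
  rw [e]
  have hp := Real.pi_gt_three
  have := (abs_le.1 (Real.sin_bound hb)).2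
  have hm : Real.sin (x - (4 * m + 1) * (Real.pi / 2)) ≤ Real.sin b :=
    Real.sin_le_sin_of_le_of_le_pi_div_two (by linarith) (by linarith [(abs_le.1 hb).2]) h2
  linarith

lemma cos_q0 (x a : ℝ) (m : ℕ) (h : |x - (4 * m) * (Real.pi / 2)| ≤ a) :
    1 - a ^ 2 / 2 ≤ Real.cos x := by
  have e : Real.cos x = Real.cos (x - (4 * m) * (Real.pi / 2)) := by
    rw [← Real.cos_sub_nat_mul_two_pi x m]; ring_nf
  rw [e]
  have := Real.one_sub_sq_div_two_le_cos (x := x - (4 * m) * (Real.pi / 2))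
  have h2 := sq_le_sq' (by linarith [neg_abs_le (x - (4 * m) * (Real.pi / 2)), h]) ((le_abs_self _).trans h)
  linarith

lemma cos_q2 (x a : ℝ) (m : ℕ) (ha : 0 ≤ a) (ha1 : a ≤ 1) (h1 : -1 ≤ x - (4 * m + 2) * (Real.pi / 2))
   (h : x - (4 * m + 2) * (Real.pi / 2) ≤ -a) :
    -(1 - a ^ 2 / 2 + a ^ 4 * (5 / 96)) ≤ Real.cos x := by
  have e : Real.cos x = -Real.cos (-(x - (4 * m + 2) * (Real.pi / 2))) := by
    rw [Real.cos_neg, show x - (4 * m + 2) * (Real.pi / 2) = x - m * (2 * Real.pi) - Real.pi by ring,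
      Real.cos_sub_pi, Real.cos_sub_nat_mul_two_pi, neg_neg]
  rw [e]
  have hp := Real.pi_gt_three
  have := (abs_le.1 (Real.cos_bound (x := a) (by rwa [abs_of_nonneg ha]))).2
  rw [abs_of_nonneg ha] at this
  have := Real.cos_le_cos_of_nonneg_of_le_pi ha (by linarith) (show a ≤ -(x - (4 * m + 2) * (Real.pi / 2)) by linarith)
  linarith

lemma inv_sqrt_bounds (n a b : ℝ) (ha : 0 < a) (hb : 0 < b) (hn : 0 < n) (h1 : a ^ 2 * n ≤ 1) (h2 : 1 ≤ b ^ 2 * n) :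
    a ≤ (√n)⁻¹ ∧ (√n)⁻¹ ≤ b := by
  have hp := Real.sqrt_pos.2 hn
  have hsq := Real.sq_sqrt hn.le
  constructor
  · rw [le_inv_comm₀ ha hp]
    apply Real.sqrt_le_iff.2 ⟨by positivity, ?_⟩
    rw [inv_pow, le_inv_comm₀ hn (by positivity)]
    rw [← one_div]
    rwa [le_div_iff₀ hn]
  · rw [inv_le_comm₀ hp hb]
    apply Real.le_sqrt_of_sq_le
    rw [inv_pow, inv_le_comm₀ (by positivity) hn, ← one_div]
    rwa [div_le_iff₀ hn]

lemma mul_ge (w lo hi c d : ℝ) (hw : lo ≤ w ∧ w ≤ hi) (hc : d ≤ c) (h0 : 0 ≤ lo) :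
    min (lo * d) (hi * d) ≤ w * c := by
  have : w * d ≤ w * c := by gcongr; linarith [hw.1]
  rcases le_total 0 d with h | h
  · exact (min_le_left _ _).trans ((mul_le_mul_of_nonneg_right hw.1 h).trans this)
  · exact (min_le_right _ _).trans ((mul_le_mul_of_nonpos_right hw.2 h).trans this)

end PE

section PF
open Complex

lemma re_zeta_17 : 0 < (riemannZeta (1 / 2 + ((17 : ℝ) : ℂ) * I)).re := by
  have h := re_zeta_ge 17 (by norm_num)
  have p1 := Real.pi_gt_d6
  have p2 := Real.pi_lt_d6
  have h2 := Real.log_two_gt_d9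
  have h2' := Real.log_two_lt_d9
  have h3 := Real.log_three_gt_d9
  have h3' := Real.log_three_lt_d9
  have h5 := Real.log_five_gt_d9
  have h5' := Real.log_five_lt_d9
  obtain ⟨h7, h7'⟩ := log7
  simp only [Finset.sum_range_succ, Finset.sum_range_zero] at h
  norm_num at h
  rw [log4, log6] at h
  have c2 : (0.692 : ℝ) ≤ Real.cos (17 * Real.log 2) :=
    le_trans (by norm_num [abs_of_nonneg, abs_of_neg]) (cos_q0 _ 0.784 2 (by rw [abs_le]; push_cast; constructor <;> linarith))
  have m2 := mul_ge _ 0.7071 0.7072 _ _ (inv_sqrt_bounds 2 0.7071 0.7072 (by norm_num) (by norm_num) (by norm_num) (by norm_num) (by norm_num)) c2 (by norm_num)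
  have c3 : (0.984 : ℝ) ≤ Real.cos (17 * Real.log 3) :=
    le_trans (by norm_num [abs_of_nonneg, abs_of_neg]) (cos_q0 _ 0.174 3 (by rw [abs_le]; push_cast; constructor <;> linarith))
  have m3 := mul_ge _ 0.5773 0.5774 _ _ (inv_sqrt_bounds 3 0.5773 0.5774 (by norm_num) (by norm_num) (by norm_num) (by norm_num) (by norm_num)) c3 (by norm_num)
  have c4 : (0.003 : ℝ) ≤ Real.cos (17 * (2 * Real.log 2)) :=
    le_trans (by norm_num [abs_of_nonneg, abs_of_neg]) (cos_q3 _ (0.004) 3 (by norm_num [abs_le]) (by push_cast; linarith) (by push_cast; linarith))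
  have m4 := mul_ge _ 0.5 0.5 _ _ (inv_sqrt_bounds 4 0.5 0.5 (by norm_num) (by norm_num) (by norm_num) (by norm_num) (by norm_num)) c4 (by norm_num)
  have c5 : (-0.612 : ℝ) ≤ Real.cos (17 * Real.log 5) :=
    le_trans (by norm_num [abs_of_nonneg, abs_of_neg]) (cos_q1 _ (0.658) 4 (by norm_num [abs_le]) (by push_cast; linarith) (by push_cast; linarith))
  have m5 := mul_ge _ 0.4472 0.4473 _ _ (inv_sqrt_bounds 5 0.4472 0.4473 (by norm_num) (by norm_num) (by norm_num) (by norm_num) (by norm_num)) c5 (by norm_num)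
  have c6 : (-1 : ℝ) ≤ Real.cos (17 * (Real.log 2 + Real.log 3)) := Real.neg_one_le_cos _
  have m6 := mul_ge _ 0.4082 0.4083 _ _ (inv_sqrt_bounds 6 0.4082 0.4083 (by norm_num) (by norm_num) (by norm_num) (by norm_num) (by norm_num)) c6 (by norm_num)
  have c7 : (-1 : ℝ) ≤ Real.cos (17 * Real.log 7) := Real.neg_one_le_cos _
  have m7 := mul_ge _ 0.3779 0.378 _ _ (inv_sqrt_bounds 7 0.3779 0.378 (by norm_num) (by norm_num) (by norm_num) (by norm_num) (by norm_num)) c7 (by norm_num)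
  norm_num at m2 m3 m4 m5 m6 m7
  rw [ofReal_ofNat]
  linarith

lemma re_zeta_22 : 0 < (riemannZeta (1 / 2 + ((22 : ℝ) : ℂ) * I)).re := by
  have h := re_zeta_ge 22 (by norm_num)
  have p1 := Real.pi_gt_d6
  have p2 := Real.pi_lt_d6
  have h2 := Real.log_two_gt_d9
  have h2' := Real.log_two_lt_d9
  have h3 := Real.log_three_gt_d9
  have h3' := Real.log_three_lt_d9
  have h5 := Real.log_five_gt_d9
  have h5' := Real.log_five_lt_d9
  obtain ⟨h7, h7'⟩ := log7
  simp only [Finset.sum_range_succ, Finset.sum_range_zero] at h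
  norm_num at h
  rw [log4, log6] at h
  have c2 : (-0.898 : ℝ) ≤ Real.cos (22 * Real.log 2) :=
    le_trans (by norm_num [abs_of_nonneg, abs_of_neg]) (cos_q2 _ (0.458) 2 (by norm_num) (by norm_num) (by push_cast; linarith) (by push_cast; linarith))
  have m2 := mul_ge _ 0.7071 0.7072 _ _ (inv_sqrt_bounds 2 0.7071 0.7072 (by norm_num) (by norm_num) (by norm_num) (by norm_num) (by norm_num)) c2 (by norm_num)
  have c3 : (0.568 : ℝ) ≤ Real.cos (22 * Real.log 3) :=
    le_trans (by norm_num [abs_of_nonneg, abs_of_neg]) (cos_q3 _ (0.607) 3 (by norm_num [abs_le]) (by push_cast; linarith) (by push_cast; linarith))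
  have m3 := mul_ge _ 0.5773 0.5774 _ _ (inv_sqrt_bounds 3 0.5773 0.5774 (by norm_num) (by norm_num) (by norm_num) (by norm_num) (by norm_num)) c3 (by norm_num)
  have c4 : (0.604 : ℝ) ≤ Real.cos (22 * (2 * Real.log 2)) :=
    le_trans (by norm_num [abs_of_nonneg, abs_of_neg]) (cos_q3 _ (0.652) 4 (by norm_num [abs_le]) (by push_cast; linarith) (by push_cast; linarith))
  have m4 := mul_ge _ 0.5 0.5 _ _ (inv_sqrt_bounds 4 0.5 0.5 (by norm_num) (by norm_num) (by norm_num) (by norm_num) (by norm_num)) c4 (by norm_num)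
  have c5 : (-0.662 : ℝ) ≤ Real.cos (22 * Real.log 5) :=
    le_trans (by norm_num [abs_of_nonneg, abs_of_neg]) (cos_q3 _ (-0.722) 5 (by norm_num [abs_le]) (by push_cast; linarith) (by push_cast; linarith))
  have m5 := mul_ge _ 0.4472 0.4473 _ _ (inv_sqrt_bounds 5 0.4472 0.4473 (by norm_num) (by norm_num) (by norm_num) (by norm_num) (by norm_num)) c5 (by norm_num)
  have c6 : (-0.15 : ℝ) ≤ Real.cos (22 * (Real.log 2 + Real.log 3)) :=
    le_trans (by norm_num [abs_of_nonneg, abs_of_neg]) (cos_q1 _ (0.15) 6 (by norm_num [abs_le]) (by push_cast; linarith) (by push_cast; linarith))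
  have m6 := mul_ge _ 0.4082 0.4083 _ _ (inv_sqrt_bounds 6 0.4082 0.4083 (by norm_num) (by norm_num) (by norm_num) (by norm_num) (by norm_num)) c6 (by norm_num)
  have c7 : (0.384 : ℝ) ≤ Real.cos (22 * Real.log 7) :=
    le_trans (by norm_num [abs_of_nonneg, abs_of_neg]) (cos_q3 _ (0.395) 6 (by norm_num [abs_le]) (by push_cast; linarith) (by push_cast; linarith))
  have m7 := mul_ge _ 0.3779 0.378 _ _ (inv_sqrt_bounds 7 0.3779 0.378 (by norm_num) (by norm_num) (by norm_num) (by norm_num) (by norm_num)) c7 (by norm_num)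
  norm_num at m2 m3 m4 m5 m6 m7
  rw [ofReal_ofNat]
  linarith

lemma re_zeta_27 : 0 < (riemannZeta (1 / 2 + ((27 : ℝ) : ℂ) * I)).re := by
  have h := re_zeta_ge 27 (by norm_num)
  have p1 := Real.pi_gt_d6
  have p2 := Real.pi_lt_d6
  have h2 := Real.log_two_gt_d9
  have h2' := Real.log_two_lt_d9
  have h3 := Real.log_three_gt_d9
  have h3' := Real.log_three_lt_d9
  have h5 := Real.log_five_gt_d9
  have h5' := Real.log_five_lt_d9
  obtain ⟨h7, h7'⟩ := log7
  simp only [Finset.sum_range_succ, Finset.sum_range_zero] at h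
  norm_num at h
  rw [log4, log6] at h
  have c2 : (0.99 : ℝ) ≤ Real.cos (27 * Real.log 2) :=
    le_trans (by norm_num [abs_of_nonneg, abs_of_neg]) (cos_q0 _ 0.136 3 (by rw [abs_le]; push_cast; constructor <;> linarith))
  have m2 := mul_ge _ 0.7071 0.7072 _ _ (inv_sqrt_bounds 2 0.7071 0.7072 (by norm_num) (by norm_num) (by norm_num) (by norm_num) (by norm_num)) c2 (by norm_num)
  have c3 : (-0.183 : ℝ) ≤ Real.cos (27 * Real.log 3) :=
    le_trans (by norm_num [abs_of_nonneg, abs_of_neg]) (cos_q3 _ (-0.184) 4 (by norm_num [abs_le]) (by push_cast; linarith) (by push_cast; linarith))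
  have m3 := mul_ge _ 0.5773 0.5774 _ _ (inv_sqrt_bounds 3 0.5773 0.5774 (by norm_num) (by norm_num) (by norm_num) (by norm_num) (by norm_num)) c3 (by norm_num)
  have c4 : (0.963 : ℝ) ≤ Real.cos (27 * (2 * Real.log 2)) :=
    le_trans (by norm_num [abs_of_nonneg, abs_of_neg]) (cos_q0 _ 0.27 6 (by rw [abs_le]; push_cast; constructor <;> linarith))
  have m4 := mul_ge _ 0.5 0.5 _ _ (inv_sqrt_bounds 4 0.5 0.5 (by norm_num) (by norm_num) (by norm_num) (by norm_num) (by norm_num)) c4 (by norm_num)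
  have c5 : (0.86 : ℝ) ≤ Real.cos (27 * Real.log 5) :=
    le_trans (by norm_num [abs_of_nonneg, abs_of_neg]) (cos_q0 _ 0.528 7 (by rw [abs_le]; push_cast; constructor <;> linarith))
  have m5 := mul_ge _ 0.4472 0.4473 _ _ (inv_sqrt_bounds 5 0.4472 0.4473 (by norm_num) (by norm_num) (by norm_num) (by norm_num) (by norm_num)) c5 (by norm_num)
  have c6 : (-1 : ℝ) ≤ Real.cos (27 * (Real.log 2 + Real.log 3)) := Real.neg_one_le_cos _
  have m6 := mul_ge _ 0.4082 0.4083 _ _ (inv_sqrt_bounds 6 0.4082 0.4083 (by norm_num) (by norm_num) (by norm_num) (by norm_num) (by norm_num)) c6 (by norm_num)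
  have c7 : (-1 : ℝ) ≤ Real.cos (27 * Real.log 7) := Real.neg_one_le_cos _
  have m7 := mul_ge _ 0.3779 0.378 _ _ (inv_sqrt_bounds 7 0.3779 0.378 (by norm_num) (by norm_num) (by norm_num) (by norm_num) (by norm_num)) c7 (by norm_num)
  norm_num at m2 m3 m4 m5 m6 m7
  rw [ofReal_ofNat]
  linarith

end PF

section PG
open Complex Filter Topology

noncomputable def stL (w : ℂ) : ℂ := (w - 1 / 2) * log w - w
noncomputable def stMu (w : ℂ) : ℂ := stL (w + 1) - stL w - log w

lemma stMu_eq (w : ℂ) (hre : 0 < w.re) : stMu w = (w + 1 / 2) * log (1 + w⁻¹) - 1 := by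
  have hw : w ≠ 0 := by intro h; simp [h] at hre
  have hi : 0 < (1 + w⁻¹).re := by
    rw [add_re, inv_re]
    have : 0 ≤ w.re / normSq w := div_nonneg hre.le (normSq_nonneg _)
    simp; linarith
  have hw2 : 1 + w⁻¹ ≠ 0 := by intro h; simp [h] at hi
  have h1 := abs_lt.1 (abs_arg_lt_pi_div_two_iff.2 (Or.inl hre))
  have h2 := abs_lt.1 (abs_arg_lt_pi_div_two_iff.2 (Or.inl hi))
  have e : log (w + 1) = log w + log (1 + w⁻¹) := by
    rw [← (log_mul_eq_add_log_iff hw hw2).2 ⟨by linarith, by linarith⟩, mul_add, mul_inv_cancel₀ hw, mul_one]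
  unfold stMu stL
  rw [e]
  ring

lemma stMu_bound (w : ℂ) (hre : 0 < w.re) (hn : (8.5 : ℝ) ≤ ‖w‖) :
    ‖stMu w‖ ≤ 0.66 / ‖w‖ ^ 2 := by
  have hw : w ≠ 0 := by intro h; simp [h] at hre
  rw [stMu_eq w hre]
  set x := w⁻¹ with hx
  have hwx : w * x = 1 := mul_inv_cancel₀ hw
  have nx : ‖x‖ = ‖w‖⁻¹ := norm_inv w
  have hx0 : 0 ≤ ‖x‖ := norm_nonneg _
  have hx1 : ‖x‖ ≤ 2 / 17 := by
    rw [nx]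
    calc ‖w‖⁻¹ ≤ (8.5 : ℝ)⁻¹ := by gcongr
      _ = 2 / 17 := by norm_num
  have h := norm_log_sub_logTaylor_le 2 (z := x) (by linarith)
  have e1 : logTaylor (2 + 1) x = x - x ^ 2 / 2 := by
    simp [logTaylor_succ, logTaylor_zero]; ring
  rw [e1] at h
  have e2 : (w + 1 / 2) * log (1 + x) - 1
      = (w + 1 / 2) * (log (1 + x) - (x - x ^ 2 / 2)) + -(x ^ 2 / 4) := by
    linear_combination (-(x / 2) + 1) * hwx
  have hinv : (1 - ‖x‖)⁻¹ ≤ 17 / 15 := by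
    calc (1 - ‖x‖)⁻¹ ≤ (15 / 17 : ℝ)⁻¹ := by gcongr; linarith
      _ = _ := by norm_num
  have nw : ‖w + 1 / 2‖ ≤ ‖w‖ * (18 / 17) := by
    calc ‖w + 1 / 2‖ ≤ ‖w‖ + ‖(1 / 2 : ℂ)‖ := norm_add_le _ _
      _ = ‖w‖ + 1 / 2 := by norm_num
      _ ≤ _ := by norm_num at hn; linarith
  have hwx' : ‖w‖ * ‖x‖ = 1 := by rw [← norm_mul, hwx, norm_one]
  rw [e2]
  calc _ ≤ ‖w + 1 / 2‖ * ‖log (1 + x) - (x - x ^ 2 / 2)‖ + ‖x ^ 2 / 4‖ := by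
        refine (norm_add_le _ _).trans ?_
        rw [norm_mul, norm_neg]
    _ ≤ (‖w‖ * (18 / 17)) * (‖x‖ ^ (2 + 1) * (17 / 15) / ((2 : ℕ) + 1)) + ‖x‖ ^ 2 / 4 := by
        have : ‖x ^ 2 / 4‖ = ‖x‖ ^ 2 / 4 := by simp
        rw [this]
        have : ‖log (1 + x) - (x - x ^ 2 / 2)‖ ≤ ‖x‖ ^ (2 + 1) * (17 / 15) / ((2 : ℕ) + 1) := by
          refine h.trans ?_
          gcongr
        gcongr
    _ = (‖w‖ * ‖x‖) * ‖x‖ ^ 2 * (2 / 5) + ‖x‖ ^ 2 / 4 := by push_cast; ring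
    _ ≤ 0.66 * ‖x‖ ^ 2 := by
        rw [hwx']; nlinarith [sq_nonneg ‖x‖]
    _ = _ := by rw [nx]; field_simp

lemma st_prod (z : ℂ) (hre : 0 < z.re) (n : ℕ) :
    ∏ k ∈ Finset.range n, (z + k) = exp (stL (z + n) - stL z - ∑ k ∈ Finset.range n, stMu (z + k)) := by
  induction n with
  | zero => simp
  | succ n ih =>
    rw [Finset.prod_range_succ, Finset.sum_range_succ, ih]
    have hne : z + n ≠ 0 := by
      intro h
      have := congrArg re h
      simp at this
      have : (0 : ℝ) ≤ n := n.cast_nonneg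
      linarith
    have e : stL (z + (n + 1 : ℕ)) - stL z - (∑ k ∈ Finset.range n, stMu (z + k) + stMu (z + n))
       = (stL (z + n) - stL z - ∑ k ∈ Finset.range n, stMu (z + k)) + log (z + n) := by
      have : z + ((n + 1 : ℕ) : ℂ) = z + n + 1 := by push_cast; ring
      rw [this]
      unfold stMu
      ring
    rw [e, exp_add, exp_log hne]

lemma st_sum (y : ℝ) (hy : 8.5 ≤ y) (n : ℕ) :
    ∑ k ∈ Finset.range n, ‖stMu ((1 / 4 + y * I : ℂ) + k)‖ ≤ 1.32 / (y - 1) - 1.32 / (y + n - 1) := by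
  norm_num at hy
  induction n with
  | zero => simp
  | succ n ih =>
    rw [Finset.sum_range_succ]
    have hn : (0 : ℝ) ≤ n := n.cast_nonneg
    have e : (1 / 4 + y * I : ℂ) + n = ((1 / 4 + n : ℝ) : ℂ) + (y : ℂ) * I := by
      push_cast; ring
    have nsq : ‖(1 / 4 + y * I : ℂ) + n‖ ^ 2 = (1 / 4 + n) ^ 2 + y ^ 2 := by
      rw [e, norm_add_mul_I, Real.sq_sqrt (by positivity)]
    have b := stMu_bound ((1 / 4 + y * I : ℂ) + n) (by simp; positivity) (by
      apply le_of_sq_le_sq _ (norm_nonneg _)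
      rw [nsq]
      nlinarith)
    rw [nsq] at b
    have : 0.66 / ((1 / 4 + (n : ℝ)) ^ 2 + y ^ 2) ≤ 1.32 / (y + n - 1) - 1.32 / (y + (n + 1 : ℕ) - 1) := by
      push_cast
      rw [div_sub_div _ _ (by linarith) (by linarith), div_le_div_iff₀ (by positivity)
        (mul_pos (by linarith) (by linarith))]
      nlinarith [sq_nonneg (y - n)]
    linarith

lemma st_lim (z : ℂ) (hre : 0 < z.re) :
    Tendsto (fun n : ℕ => (z * log n - stL (z + (n + 1 : ℕ))).im) atTop (𝓝 0) := by
  have h0 : Tendsto (fun n : ℕ => (n : ℂ) * log (1 + (z + 1) / n)) atTop (𝓝 (z + 1)) := by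
    apply tendsto_nat_mul_log_one_add_of_tendsto
    apply tendsto_const_nhds.congr'
    filter_upwards [eventually_ge_atTop 1] with n hn
    have : (n : ℂ) ≠ 0 := by exact_mod_cast (by omega)
    field_simp
  have hinv : Tendsto (fun n : ℕ => ((n : ℂ))⁻¹) atTop (𝓝 0) := tendsto_inv_atTop_nhds_zero_nat
  have h1 : Tendsto (fun n : ℕ => log (1 + (z + 1) / n)) atTop (𝓝 0) := by
    have := hinv.mul h0
    rw [zero_mul] at this
    apply this.congr'
    filter_upwards [eventually_ge_atTop 1] with n hn
    have : (n : ℂ) ≠ 0 := by exact_mod_cast (by omega)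
    field_simp
  have h2 : Tendsto (fun n : ℕ => (z + 1 - ((n : ℂ) * log (1 + (z + 1) / n)
      + (z + 1 / 2) * log (1 + (z + 1) / n))).im) atTop (𝓝 0) := by
    have := (tendsto_const_nhds (x := z + 1)).sub (h0.add (h1.const_mul (z + 1 / 2)))
    have := (continuous_im.tendsto _).comp this
    rw [mul_zero, add_zero, sub_self, zero_im] at this
    exact this
  apply h2.congr'
  filter_upwards [eventually_ge_atTop 1] with n hn
  have hn0 : (n : ℂ) ≠ 0 := by exact_mod_cast (by omega)
  have hnp : (0 : ℝ) < n := by exact_mod_cast hn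
  have e : z + ((n + 1 : ℕ) : ℂ) = ((n : ℝ) : ℂ) * (1 + (z + 1) / n) := by
    push_cast; field_simp; ring
  have hne : 1 + (z + 1) / n ≠ 0 := by
    intro h
    rw [h, mul_zero] at e
    have := congrArg re e
    simp at this
    linarith
  have el : log (z + ((n + 1 : ℕ) : ℂ)) = ((Real.log n : ℝ) : ℂ) + log (1 + (z + 1) / n) := by
    rw [e, log_ofReal_mul hnp hne]
  have : z * log n - stL (z + (n + 1 : ℕ)) = z + 1 - ((n : ℂ) * log (1 + (z + 1) / n)
      + (z + 1 / 2) * log (1 + (z + 1) / n)) + (((n - (n + 1 / 2) * Real.log n) : ℝ) : ℂ) := by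
    unfold stL
    rw [el, ← natCast_log]
    push_cast
    ring
  rw [this, add_im, ofReal_im, add_zero]

lemma gamma_phase (y : ℝ) (hy : 8.5 ≤ y) :
    0.97 * ‖Gamma (1 / 4 + y * I) * exp (-stL (1 / 4 + y * I))‖
      ≤ (Gamma (1 / 4 + y * I) * exp (-stL (1 / 4 + y * I))).re := by
  set z : ℂ := 1 / 4 + y * I with hz
  have hre : 0 < z.re := by simp [hz]
  have hT : Tendsto (fun n => GammaSeq z n * exp (-stL z)) atTop (𝓝 (Gamma z * exp (-stL z))) :=
    (GammaSeq_tendsto_Gamma z).mul_const _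
  have hl := st_lim z hre
  have hev : ∀ᶠ n : ℕ in atTop, |(z * log n - stL (z + (n + 1 : ℕ))).im| < 0.024 := by
    have := hl.eventually (Metric.ball_mem_nhds 0 (show (0 : ℝ) < 0.024 by norm_num))
    filter_upwards [this] with n hn
    simpa using hn
  refine le_of_tendsto_of_tendsto (hT.norm.const_mul 0.97) ((continuous_re.tendsto _).comp hT) ?_
  filter_upwards [hev, eventually_ge_atTop 1] with n hn hn1
  have hn0 : (n : ℂ) ≠ 0 := by exact_mod_cast (by omega)
  have key : GammaSeq z n * exp (-stL z) = ((n.factorial : ℝ) : ℂ) * exp ((z * log n - stL (z + (n + 1 : ℕ)))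
      + ∑ k ∈ Finset.range (n + 1), stMu (z + k)) := by
    rw [GammaSeq, st_prod z hre, cpow_def_of_ne_zero hn0, div_eq_mul_inv, ← exp_neg]
    rw [mul_comm (exp (log n * z)), mul_assoc, mul_assoc, ← exp_add, ← exp_add]
    push_cast
    congr 2
    ring
  have hsum : |(∑ k ∈ Finset.range (n + 1), stMu (z + k)).im| ≤ 0.176 := by
    refine (abs_im_le_norm _).trans ((norm_sum_le _ _).trans ((st_sum y hy (n + 1)).trans ?_))
    norm_num at hy
    have hnn : (0 : ℝ) ≤ (n + 1 : ℕ) := Nat.cast_nonneg _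
    have : 0 ≤ 1.32 / (y + (n + 1 : ℕ) - 1) := div_nonneg (by norm_num) (by linarith)
    have : 1.32 / (y - 1) ≤ 0.176 := by
      rw [div_le_iff₀ (by linarith)]; linarith
    linarith
  simp only [Function.comp]
  rw [key]
  set c := (z * log n - stL (z + (n + 1 : ℕ))) + ∑ k ∈ Finset.range (n + 1), stMu (z + k) with hc
  have him : |c.im| ≤ 0.2 := by
    rw [hc, add_im]
    refine (abs_add_le _ _).trans ?_
    linarith
  rw [re_ofReal_mul, exp_re, norm_mul, norm_real, norm_exp]
  have hcos : 0.97 ≤ Real.cos c.im := by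
    have h1 := Real.one_sub_sq_div_two_le_cos (x := c.im)
    have h2 := sq_le_sq' (by linarith [(abs_le.1 him).1]) (abs_le.1 him).2
    linarith
  have hp : 0 ≤ (n.factorial : ℝ) * Real.exp c.re := by positivity
  rw [Real.norm_of_nonneg (by positivity)]
  nlinarith

end PG

section PH
open Complex Filter Topology

noncomputable def phB (y : ℝ) : ℝ :=
  y * (Real.log (y ^ 2 + 1 / 16) / 2) - y * Real.log Real.pi - y

lemma gammaR_eq (y : ℝ) (hy : 8.5 ≤ y) : ∃ B u : ℂ, Gammaℝ (1 / 2 + ((2 * y : ℝ) : ℂ) * I) = exp B * u ∧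
    u ≠ 0 ∧ 0.97 * ‖u‖ ≤ u.re ∧ phB y - 0.4 ≤ B.im ∧ B.im ≤ phB y := by
  have h := gamma_phase y hy
  norm_num at hy
  have hz0 : (0 : ℝ) < y := by linarith
  set z : ℂ := 1 / 4 + y * I with hz
  have hzre : z.re = 1 / 4 := by simp [hz]
  have hzim : z.im = y := by simp [hz]
  have hzne : z ≠ 0 := by intro h; rw [h] at hzre; norm_num at hzre
  have hG : Gamma z ≠ 0 := Gamma_ne_zero_of_re_pos (by rw [hzre]; norm_num)
  refine ⟨-z * log Real.pi + stL z, Gamma z * exp (-stL z), ?_, ?_, h, ?_⟩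
  · have e : -(1 / 2 + ((2 * y : ℝ) : ℂ) * I) / 2 = -z := by rw [hz]; push_cast; ring
    have e' : (1 / 2 + ((2 * y : ℝ) : ℂ) * I) / 2 = z := by rw [hz]; push_cast; ring
    rw [Gammaℝ_def, e, e', cpow_def_of_ne_zero (by exact_mod_cast Real.pi_ne_zero)]
    rw [mul_comm (Gamma z), ← mul_assoc, ← exp_add]
    congr 2
    ring
  · exact mul_ne_zero hG (exp_ne_zero _)
  · have hn : ‖z‖ = √(y ^ 2 + 1 / 16) := by
      have : z = ((1 / 4 : ℝ) : ℂ) + (y : ℂ) * I := by rw [hz]; push_cast; ring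
      rw [this, norm_add_mul_I]; congr 1; ring
    have hlog : Real.log ‖z‖ = Real.log (y ^ 2 + 1 / 16) / 2 := by
      rw [hn, Real.log_sqrt (by positivity)]
    have him : (-z * log Real.pi + stL z).im = phB y - arg z / 4 := by
      rw [← ofReal_log Real.pi_pos.le]
      unfold stL phB
      simp only [add_im, sub_im, mul_im, neg_im, neg_re, ofReal_re, ofReal_im, log_re, log_im, sub_re,
        hzre, hzim, hlog]
      norm_num
      ring
    rw [him]
    have a0 : 0 ≤ arg z := arg_nonneg_iff.2 (by rw [hzim]; linarith)
    have a1 : |arg z| ≤ Real.pi / 2 := abs_arg_le_pi_div_two_iff.2 (by rw [hzre]; norm_num)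
    have := (abs_le.1 a1).2
    have := Real.pi_lt_d2
    constructor <;> linarith

lemma re_pos_of_phase (B u : ℂ) (hu : u ≠ 0) (h : 0.97 * ‖u‖ ≤ u.re) (hc : 0.5 ≤ Real.cos B.im) :
    0 < (exp B * u).re := by
  have hp : 0 < ‖u‖ := norm_pos_iff.2 hu
  have hsq : ‖u‖ ^ 2 = u.re ^ 2 + u.im ^ 2 := by
    rw [← normSq_eq_norm_sq, normSq_apply]; ring
  have hi : |u.im| ≤ 0.25 * ‖u‖ := by
    apply abs_le_of_sq_le_sq _ (by positivity)
    nlinarith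
  rw [mul_re, exp_re, exp_im]
  have hs : |Real.sin B.im * u.im| ≤ 0.25 * ‖u‖ := by
    rw [abs_mul]
    calc |Real.sin B.im| * |u.im| ≤ 1 * |u.im| := by
          gcongr; exact Real.abs_sin_le_one _
      _ ≤ _ := by linarith
  have h1 := (abs_le.1 hs).2
  have h2 : 0.5 * (0.97 * ‖u‖) ≤ Real.cos B.im * u.re := by gcongr
  have : 0 < Real.exp B.re * (Real.cos B.im * u.re - Real.sin B.im * u.im) := by
    apply mul_pos (Real.exp_pos _); linarith
  linarith

lemma cos_half (x : ℝ) (h : |x| ≤ 1) : 0.5 ≤ Real.cos x := by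
  have h1 := Real.one_sub_sq_div_two_le_cos (x := x)
  have h2 := sq_le_sq' (by linarith [(abs_le.1 h).1]) (abs_le.1 h).2
  linarith

lemma log_pi_bounds : (1.143 : ℝ) ≤ Real.log Real.pi ∧ Real.log Real.pi ≤ 1.1459 := by
  have p1 := Real.pi_gt_d6
  have p2 := Real.pi_lt_d6
  have h3 := Real.log_three_gt_d9
  have h3' := Real.log_three_lt_d9
  have e : Real.log Real.pi = Real.log 3 + Real.log (Real.pi / 3) := by
    rw [Real.log_div Real.pi_ne_zero (by norm_num)]; ring
  have u := Real.log_le_sub_one_of_pos (show 0 < Real.pi / 3 by positivity)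
  have l := Real.one_sub_inv_le_log_of_pos (show 0 < Real.pi / 3 by positivity)
  have : (Real.pi / 3)⁻¹ ≤ (1.047 : ℝ)⁻¹ := by gcongr; linarith
  have : (1.047 : ℝ)⁻¹ ≤ 0.9552 := by norm_num
  constructor <;> linarith

lemma log_near (a x : ℝ) (ha : 0 < a) (hx : a ≤ x) : Real.log a ≤ Real.log x ∧
    Real.log x ≤ Real.log a + (x / a - 1) := by
  refine ⟨Real.log_le_log ha hx, ?_⟩
  have := Real.log_le_sub_one_of_pos (show 0 < x / a by apply div_pos <;> linarith)
  rw [Real.log_div (by linarith) ha.ne'] at this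
  linarith

lemma log_smooth (a b c : ℕ) : Real.log (2 ^ a * 3 ^ b * 5 ^ c)
    = a * Real.log 2 + b * Real.log 3 + c * Real.log 5 := by
  rw [Real.log_mul (by positivity) (by positivity), Real.log_mul (by positivity) (by positivity),
    Real.log_pow, Real.log_pow, Real.log_pow]

lemma gammaR_17 : 0 < (Gammaℝ (1 / 2 + ((17 : ℝ) : ℂ) * I)).re := by
  obtain ⟨B, u, e, hu, hn, l, r⟩ := gammaR_eq 8.5 (by norm_num)
  have e0 : (17 : ℝ) = 2 * 8.5 := by norm_num
  rw [e0, e]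
  apply re_pos_of_phase B u hu hn
  apply cos_half
  have h2 := Real.log_two_gt_d9
  have h2' := Real.log_two_lt_d9
  have h3 := Real.log_three_gt_d9
  have h3' := Real.log_three_lt_d9
  obtain ⟨q1, q2⟩ := log_pi_bounds
  have s := log_smooth 3 2 0
  obtain ⟨n1, n2⟩ := log_near (2 ^ 3 * 3 ^ 2 * 5 ^ 0) (8.5 ^ 2 + 1 / 16) (by norm_num) (by norm_num)
  rw [s] at n1 n2
  unfold phB at l r
  generalize Real.log (8.5 ^ 2 + 1 / 16) = X at *
  norm_num at n1 n2 l r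
  rw [abs_le]
  constructor <;> linarith

lemma gammaR_27 : 0 < (Gammaℝ (1 / 2 + ((27 : ℝ) : ℂ) * I)).re := by
  obtain ⟨B, u, e, hu, hn, l, r⟩ := gammaR_eq 13.5 (by norm_num)
  have e0 : (27 : ℝ) = 2 * 13.5 := by norm_num
  rw [e0, e]
  apply re_pos_of_phase B u hu hn
  rw [← Real.cos_sub_two_pi]
  apply cos_half
  have p1 := Real.pi_gt_d6
  have p2 := Real.pi_lt_d6
  have h2 := Real.log_two_gt_d9
  have h2' := Real.log_two_lt_d9
  have h3 := Real.log_three_gt_d9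
  have h3' := Real.log_three_lt_d9
  have h5 := Real.log_five_gt_d9
  have h5' := Real.log_five_lt_d9
  obtain ⟨q1, q2⟩ := log_pi_bounds
  have s := log_smooth 2 2 1
  obtain ⟨n1, n2⟩ := log_near (2 ^ 2 * 3 ^ 2 * 5 ^ 1) (13.5 ^ 2 + 1 / 16) (by norm_num) (by norm_num)
  rw [s] at n1 n2
  unfold phB at l r
  generalize Real.log (13.5 ^ 2 + 1 / 16) = X at *
  norm_num at n1 n2 l r
  rw [abs_le]
  constructor <;> linarith

lemma gammaR_22 : (Gammaℝ (1 / 2 + ((22 : ℝ) : ℂ) * I)).re < 0 := by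
  obtain ⟨B, u, e, hu, hn, l, r⟩ := gammaR_eq 11 (by norm_num)
  have e0 : (22 : ℝ) = 2 * 11 := by norm_num
  rw [e0, e]
  suffices 0 < (exp (B - Real.pi * I) * u).re by
    rw [exp_sub, exp_pi_mul_I, div_neg, div_one, neg_mul, neg_re] at this
    linarith
  apply re_pos_of_phase _ u hu hn
  apply cos_half
  have e1 : (B - Real.pi * I).im = B.im - Real.pi := by simp
  rw [e1]
  have p1 := Real.pi_gt_d6
  have p2 := Real.pi_lt_d6
  have h2 := Real.log_two_gt_d9
  have h2' := Real.log_two_lt_d9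
  have h3 := Real.log_three_gt_d9
  have h3' := Real.log_three_lt_d9
  have h5 := Real.log_five_gt_d9
  have h5' := Real.log_five_lt_d9
  obtain ⟨q1, q2⟩ := log_pi_bounds
  have s := log_smooth 3 1 1
  obtain ⟨n1, n2⟩ := log_near (2 ^ 3 * 3 ^ 1 * 5 ^ 1) (11 ^ 2 + 1 / 16) (by norm_num) (by norm_num)
  rw [s] at n1 n2
  unfold phB at l r
  generalize Real.log (11 ^ 2 + 1 / 16) = X at *
  norm_num at n1 n2 l r
  rw [abs_le]
  constructor <;> linarith

lemma conj_line (t : ℝ) : (starRingEnd ℂ) (1 / 2 + (t : ℂ) * I) = 1 - (1 / 2 + (t : ℂ) * I) := by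
  apply Complex.ext <;> simp <;> norm_num

lemma xf_line_im (t : ℝ) : (xf (1 / 2 + (t : ℂ) * I)).im = 0 := by
  have h := xf_conj (1 / 2 + (t : ℂ) * I)
  rw [conj_line, xf_one_sub] at h
  exact conj_eq_iff_im.1 h.symm

lemma xf_line_sign (t : ℝ) (hz : 0 < (riemannZeta (1 / 2 + (t : ℂ) * I)).re) :
    ∃ c : ℝ, 0 < c ∧ (Gammaℝ (1 / 2 + (t : ℂ) * I)).re = -c * (xf (1 / 2 + (t : ℂ) * I)).re := by
  have him := xf_line_im t
  set s : ℂ := 1 / 2 + (t : ℂ) * I with hs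
  have hre : s.re = 1 / 2 := by simp [hs]
  have h0 : s ≠ 0 := by intro h; rw [h] at hre; norm_num at hre
  have h1 : s ≠ 1 := by intro h; rw [h] at hre; norm_num at hre
  have e := xf_eq s h0 h1
  rw [completed_eq s (by rw [hre]; norm_num)] at e
  have e2 : s * (s - 1) = ((-(1 / 4 + t ^ 2) : ℝ) : ℂ) := by
    rw [hs]; push_cast; linear_combination (t : ℂ) ^ 2 * I_sq
  rw [e2] at e
  set a := Gammaℝ s
  set b := riemannZeta s
  have er : (xf s).re = -(1 / 4 + t ^ 2) * (a.re * b.re - a.im * b.im) := by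
    rw [e, re_ofReal_mul, mul_re]
  have ei : 0 = -(1 / 4 + t ^ 2) * (a.re * b.im + a.im * b.re) := by
    rw [← him, e, im_ofReal_mul, mul_im]
  have hk : 0 < 1 / 4 + t ^ 2 := by positivity
  have ei' : a.re * b.im + a.im * b.re = 0 := by
    rcases mul_eq_zero.1 ei.symm with h | h
    · linarith
    · exact h
  have hb : 0 < b.re ^ 2 + b.im ^ 2 := by positivity
  refine ⟨b.re / ((1 / 4 + t ^ 2) * (b.re ^ 2 + b.im ^ 2)), by positivity, ?_⟩
  rw [er]
  field_simp
  linear_combination b.im * ei'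

lemma line_zero (a b : ℝ) (hab : a < b)
    (h : (xf (1 / 2 + (a : ℂ) * I)).re * (xf (1 / 2 + (b : ℂ) * I)).re < 0) :
    ∃ ρ : ℂ, xf ρ = 0 ∧ a < ρ.im ∧ ρ.im < b := by
  have hc : Continuous fun t : ℝ => (xf (1 / 2 + (t : ℂ) * I)).re := by
    have h2 : Continuous fun t : ℝ => (1 / 2 + (t : ℂ) * I : ℂ) := by fun_prop
    exact continuous_re.comp (xf_diff.continuous.comp h2)
  have key : ∃ t ∈ Set.Ioo a b, (xf (1 / 2 + (t : ℂ) * I)).re = 0 := by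
    rcases mul_neg_iff.1 h with ⟨h1, h2⟩ | ⟨h1, h2⟩
    · exact intermediate_value_Ioo' hab.le hc.continuousOn ⟨h2, h1⟩
    · exact intermediate_value_Ioo hab.le hc.continuousOn ⟨h1, h2⟩
  obtain ⟨t, ht, h0⟩ := key
  refine ⟨1 / 2 + (t : ℂ) * I, Complex.ext h0 (xf_line_im t), ?_⟩
  simpa using ht

lemma s0 : 0 < (xf (1 / 2 + ((0 : ℝ) : ℂ) * I)).re := by
  have := xf_half_pos
  simpa using this

lemma s17 : (xf (1 / 2 + ((17 : ℝ) : ℂ) * I)).re < 0 := by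
  obtain ⟨c, hc, e⟩ := xf_line_sign 17 re_zeta_17
  have := gammaR_17
  rw [e] at this
  nlinarith

lemma s22 : 0 < (xf (1 / 2 + ((22 : ℝ) : ℂ) * I)).re := by
  obtain ⟨c, hc, e⟩ := xf_line_sign 22 re_zeta_22
  have := gammaR_22
  rw [e] at this
  nlinarith

lemma s27 : (xf (1 / 2 + ((27 : ℝ) : ℂ) * I)).re < 0 := by
  obtain ⟨c, hc, e⟩ := xf_line_sign 27 re_zeta_27
  have := gammaR_27
  rw [e] at this
  nlinarith

/-- Imaginary parts of three zeros. -/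
lemma imag_pos (t : ℝ) (ht : 0 ≤ t) : ∃ a b c : ℂ, xf a = 0 ∧ xf b = 0 ∧ xf c = 0 ∧
    a.im < b.im ∧ b.im < c.im ∧ |t - a.im| ≤ 22 ∧ |t - b.im| ≤ 22 ∧ |t - c.im| ≤ 22 := by
  obtain ⟨r1, z1, l1, u1⟩ := line_zero 0 17 (by norm_num) (mul_neg_of_pos_of_neg s0 s17)
  obtain ⟨r2, z2, l2, u2⟩ := line_zero 17 22 (by norm_num) (mul_neg_of_neg_of_pos s17 s22)
  obtain ⟨r3, z3, l3, u3⟩ := line_zero 22 27 (by norm_num) (mul_neg_of_pos_of_neg s22 s27)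
  obtain ⟨w1, y1, v1⟩ := window 34.4 (by norm_num)
  obtain ⟨w2, y2, v2⟩ := window 49.1 (by norm_num)
  rw [abs_lt] at v1 v2
  norm_num at v1 v2
  obtain ⟨v1, v1'⟩ := v1
  obtain ⟨v2, v2'⟩ := v2
  rcases le_total t 5 with h5 | h5
  · refine ⟨(starRingEnd ℂ) r1, r1, r2, by rw [xf_conj, z1, map_zero], z1, z2, ?_⟩
    rw [conj_im]
    simp only [abs_le]
    refine ⟨?_, ?_, ⟨?_, ?_⟩, ⟨?_, ?_⟩, ?_, ?_⟩ <;> linarith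
  rcases le_total t 22 with h22 | h22
  · refine ⟨r1, r2, r3, z1, z2, z3, ?_⟩
    simp only [abs_le]
    refine ⟨?_, ?_, ⟨?_, ?_⟩, ⟨?_, ?_⟩, ?_, ?_⟩ <;> linarith
  rcases le_total t 39 with h39 | h39
  · refine ⟨r2, r3, w1, z2, z3, y1, ?_⟩
    simp only [abs_le]
    refine ⟨?_, ?_, ⟨?_, ?_⟩, ⟨?_, ?_⟩, ?_, ?_⟩ <;> linarith
  rcases le_total t 44 with h44 | h44
  · refine ⟨r3, w1, w2, z3, y1, y2, ?_⟩
    simp only [abs_le]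
    refine ⟨?_, ?_, ⟨?_, ?_⟩, ⟨?_, ?_⟩, ?_, ?_⟩ <;> linarith
  obtain ⟨a, ya, va⟩ := window (t - 44 / 3) (by norm_num; linarith)
  obtain ⟨b, yb, vb⟩ := window t (by norm_num; linarith)
  obtain ⟨c, yc, vc⟩ := window (t + 44 / 3) (by norm_num; linarith)
  rw [abs_lt] at va vb vc
  refine ⟨a, b, c, ya, yb, yc, ?_⟩
  simp only [abs_le]
  refine ⟨?_, ?_, ⟨?_, ?_⟩, ⟨?_, ?_⟩, ?_, ?_⟩ <;> linarith

lemma imag_all (t : ℝ) : ∃ a b c : ℂ, xf a = 0 ∧ xf b = 0 ∧ xf c = 0 ∧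
    a.im < b.im ∧ b.im < c.im ∧ |t - a.im| ≤ 22 ∧ |t - b.im| ≤ 22 ∧ |t - c.im| ≤ 22 := by
  rcases le_total 0 t with h | h
  · exact imag_pos t h
  obtain ⟨a, b, c, ha, hb, hc, h1, h2, h3, h4, h5⟩ := imag_pos (-t) (by linarith)
  refine ⟨(starRingEnd ℂ) c, (starRingEnd ℂ) b, (starRingEnd ℂ) a, by rw [xf_conj, hc, map_zero],
    by rw [xf_conj, hb, map_zero], by rw [xf_conj, ha, map_zero], ?_⟩
  simp only [conj_im]
  rw [abs_le] at *
  refine ⟨?_, ?_, ?_, ?_, ?_⟩ <;> (try rw [abs_le] at *) <;> (try constructor) <;> linarith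

lemma fold_zero (a : ℂ) (h : xf a = 0) : ∃ ρ : ℂ, ρ.im = a.im ∧
    completedRiemannZeta ρ = 0 ∧ 0 < ρ.re ∧ ρ.re ≤ 1 / 2 := by
  obtain ⟨h1, h2, h3⟩ := xf_zero a h
  rcases le_total a.re (1 / 2) with hr | hr
  · exact ⟨a, rfl, h1, h2, hr⟩
  · have hz : xf (1 - (starRingEnd ℂ) a) = 0 := by rw [xf_one_sub, xf_conj, h, map_zero]
    obtain ⟨k1, k2, k3⟩ := xf_zero _ hz
    refine ⟨1 - (starRingEnd ℂ) a, by simp, k1, k2, ?_⟩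
    simp; linarith

end PH

theorem three_zeta_zeros_near (t : ℝ) :
    ∃ ρ₁ ρ₂ ρ₃ : ℂ, ρ₁ ≠ ρ₂ ∧ ρ₁ ≠ ρ₃ ∧ ρ₂ ≠ ρ₃ ∧
      ∀ ρ ∈ ({ρ₁, ρ₂, ρ₃} : Set ℂ),
        completedRiemannZeta ρ = 0 ∧ 0 < ρ.re ∧ ρ.re ≤ 1 / 2 ∧ |t - ρ.im| ≤ 22 := by
  obtain ⟨a, b, c, ha, hb, hc, h1, h2, h3, h4, h5⟩ := imag_all t
  obtain ⟨x, xi, x1, x2, x3⟩ := fold_zero a ha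
  obtain ⟨y, yi, y1, y2, y3⟩ := fold_zero b hb
  obtain ⟨z, zi, z1, z2, z3⟩ := fold_zero c hc
  rw [← xi] at h1 h3
  rw [← yi] at h1 h2 h4
  rw [← zi] at h2 h5
  refine ⟨x, y, z, ?_, ?_, ?_, ?_⟩
  · rintro rfl; exact lt_irrefl _ h1
  · rintro rfl; exact lt_irrefl _ (h1.trans h2)
  · rintro rfl; exact lt_irrefl _ h2
  · intro ρ hρ
    simp only [Set.mem_insert_iff, Set.mem_singleton_iff] at hρ
    rcases hρ with rfl | rfl | rfl
    · exact ⟨x1, x2, x3, h3⟩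
    · exact ⟨y1, y2, y3, h4⟩
    · exact ⟨z1, z2, z3, h5⟩
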